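/- arXiv:2002.04681 — 3 statements merged into one kernel-verified Lean document; each statement's English description precedes it below -/
import Mathlib

section
/- 𝓗 equals the set of all (x, X, y, Y₁₂) for which there exist α ∈ ℝ² and β ∈ ℝ² such that: (i) x ≤ y componentwise; (ii) the 3×3 symmetric matrix [[Y₁₂, (x−α)ᵀ], [x−α, X−Diag(β)]] is positive semidefinite and lies in RLT_x; (iii) (α_j, β_j, y_j − Y₁₂) ∈ PER for j = 1, 2; and (iv) (y, Y₁₂) ∈ RLT_y. -/
/-!
Homogenise by a leading coordinate `1`, and split the generators of `𝓗` according to `y ∈ {0, 1}²`,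
so that the cone over `𝓗` is a sum of four cones. For `y = (1, 1)` this is the cone of moment
matrices of measures on the unit square, for `y` a unit vector the cone over the moment curve
`(t, t², 1)` of an interval, which is PER, and for `y = 0` a ray. The variables `(α j, β j)` and
`Y₁₂` record the parts of a point in these cones.

That positive semidefiniteness and RLT characterise the moment matrices of the square
(Anstreicher and Burer) is shown by subtracting from `M` the largest multiple of the moment matrix
of its barycentre that keeps all slacks nonnegative. The rest is still positive semidefinite and one
of its slacks vanishes, which forces every representing measure onto two edges of the square. Up to
a symmetry these edges are `u = 0` and `u = 1`, or `u = 0` and `v = 0`; there the entries of the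
matrix split into two elements of PER.
-/

open Matrix

/-- The perspective cone PER = {(a, b, c) : a² ≤ b·c, 0 ≤ b ≤ a ≤ c}. -/
def PER : Set (ℝ × ℝ × ℝ) :=
  {p | p.1 ^ 2 ≤ p.2.1 * p.2.2 ∧ 0 ≤ p.2.1 ∧ p.2.1 ≤ p.1 ∧ p.1 ≤ p.2.2}

/-- RLT_x : symmetric 3×3 matrices [[λ, xᵀ],[x, X]] with λ ≥ 0, 0 ≤ diag(X) ≤ x,
max{0, x₁+x₂−λ} ≤ X₁₂ ≤ min{x₁, x₂}. -/
def RLTx : Set (Matrix (Fin 3) (Fin 3) ℝ) :=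
  {M | M.IsSymm ∧ 0 ≤ M 0 0 ∧
    0 ≤ M 1 1 ∧ M 1 1 ≤ M 0 1 ∧ 0 ≤ M 2 2 ∧ M 2 2 ≤ M 0 2 ∧
    max 0 (M 0 1 + M 0 2 - M 0 0) ≤ M 1 2 ∧ M 1 2 ≤ min (M 0 1) (M 0 2)}

/-- RLT_y = {(y, Y₁₂) : max{0, y₁+y₂−1} ≤ Y₁₂ ≤ min{y₁, y₂}}. -/
def RLTy : Set ((Fin 2 → ℝ) × ℝ) :=
  {p | max 0 (p.1 0 + p.1 1 - 1) ≤ p.2 ∧ p.2 ≤ min (p.1 0) (p.1 1)}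

/-- 𝓗 = conv{(x, xxᵀ, y, y₁y₂) : 0 ≤ x ≤ y, y ∈ {0,1}²}. -/
def Hset : Set ((Fin 2 → ℝ) × Matrix (Fin 2) (Fin 2) ℝ × (Fin 2 → ℝ) × ℝ) :=
  convexHull ℝ {p | ∃ x y : Fin 2 → ℝ,
    (∀ i, 0 ≤ x i) ∧ (∀ i, x i ≤ y i) ∧ (∀ i, y i = 0 ∨ y i = 1) ∧
    p = (x, Matrix.vecMulVec x x, y, y 0 * y 1)}

section ConvexCone

variable {𝕜 E : Type*} [Field 𝕜] [LinearOrder 𝕜] [IsStrictOrderedRing 𝕜]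
  [AddCommGroup E] [Module 𝕜 E]

theorem mem_convexHull_iff_mk_one_mem_hull {s : Set E} {x : E} :
    x ∈ convexHull 𝕜 s ↔ ((1 : 𝕜), x) ∈ PointedCone.hull 𝕜 (Prod.mk (1 : 𝕜) '' s) := by
  constructor
  · intro hx
    have hconv : Convex 𝕜 {y | ((1 : 𝕜), y) ∈ PointedCone.hull 𝕜 (Prod.mk (1 : 𝕜) '' s)} := by
      intro y hy z hz a b ha hb hab
      simpa [hab] using add_mem
        (PointedCone.smul_mem _ ha hy.out) (PointedCone.smul_mem _ hb hz.out)
    have hsub : s ⊆ {y | ((1 : 𝕜), y) ∈ PointedCone.hull 𝕜 (Prod.mk (1 : 𝕜) '' s)} :=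
      fun y hy => PointedCone.subset_hull ⟨y, hy, rfl⟩
    exact convexHull_min hsub hconv hx
  · rw [PointedCone.mem_hull_set]
    rintro ⟨c, hc, hc₀, hsum⟩
    have hmem : ∀ q ∈ c.support, q.1 = 1 ∧ q.2 ∈ convexHull 𝕜 s := by
      intro q hq
      obtain ⟨y, hy, rfl⟩ := hc hq
      exact ⟨rfl, subset_convexHull 𝕜 s hy⟩
    have hweight : ∑ q ∈ c.support, c q = 1 := by
      have := congrArg Prod.fst hsum
      rw [Finsupp.sum, Prod.fst_sum] at this
      exact .trans (Finset.sum_congr rfl fun q hq => by simp [(hmem q hq).1]) this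
    have hpoint : ∑ q ∈ c.support, c q • q.2 = x := by
      have := congrArg Prod.snd hsum
      rwa [Finsupp.sum, Prod.snd_sum] at this
    rw [← hpoint]
    exact (convex_convexHull 𝕜 s).sum_mem (fun q _ => hc₀ q) hweight fun q hq => (hmem q hq).2

theorem pointedCone_map_hull {F : Type*} [AddCommGroup F] [Module 𝕜 F] (f : E →ₗ[𝕜] F)
    (s : Set E) : (PointedCone.hull 𝕜 s).map f = PointedCone.hull 𝕜 (f '' s) :=
  Submodule.map_span _ _

end ConvexCone

section OrderedField

variable {𝕜 : Type*} [Field 𝕜] [LinearOrder 𝕜] [IsStrictOrderedRing 𝕜]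

theorem exists_mem_Icc_mul_le_and_eq {ι : Type*} [Finite ι] {f g : ι → 𝕜} (hf : ∀ i, 0 ≤ f i)
    (hfg : ∃ i, f i ≤ g i) :
    ∃ t ∈ Set.Icc (0 : 𝕜) 1, (∀ i, t * g i ≤ f i) ∧ ∃ i, t * g i = f i := by
  obtain ⟨i₀, hi₀⟩ := hfg
  rcases (hf i₀).eq_or_lt with hzero | hpos
  · exact ⟨0, by simp, by simpa using hf, i₀, by simpa using hzero⟩
  obtain ⟨j, hj, hmin⟩ := Set.exists_min_image {i | 0 < g i} (fun i => f i / g i)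
    (Set.toFinite _) ⟨i₀, hpos.trans_le hi₀⟩
  refine ⟨f j / g j, ⟨div_nonneg (hf j) (le_of_lt hj), ?_⟩, fun i => ?_, j,
    div_mul_cancel₀ _ (ne_of_gt hj)⟩
  · exact (hmin i₀ (hpos.trans_le hi₀)).trans (div_le_one_of_le₀ hi₀ (hpos.le.trans hi₀))
  · rcases le_or_gt (g i) 0 with hgi | hgi
    · exact (mul_nonpos_of_nonneg_of_nonpos (div_nonneg (hf j) (le_of_lt hj)) hgi).trans (hf i)
    · exact (le_div_iff₀ hgi).1 (hmin i hgi)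

theorem sq_div_add_sq_div_le_of_forall_nonneg {p q r s d : 𝕜}
    (h : ∀ x y, 0 ≤ p * x ^ 2 + 2 * r * x + (q * y ^ 2 + 2 * s * y) + d) :
    r ^ 2 / p + s ^ 2 / q ≤ d := by
  have vertex (a b : 𝕜) : a * (-(b / a)) ^ 2 + 2 * b * (-(b / a)) = -(b ^ 2 / a) := by
    rcases eq_or_ne a 0 with rfl | ha
    · simp
    · field_simp
      ring
  have := h (-(r / p)) (-(s / q))
  rw [vertex, vertex] at this
  linarith

end OrderedField

section PosSemidef

variable {n : Type*} {M : Matrix n n ℝ}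

theorem sq_apply_le_diag_mul_diag_of_posSemidef (hM : M.PosSemidef) (i j : n) :
    M i j ^ 2 ≤ M i i * M j j := by
  have hdet := (hM.submatrix ![i, j]).det_nonneg
  have hsymm : M j i = M i j := by simpa using hM.isHermitian.apply i j
  simp only [det_fin_two, submatrix_apply, cons_val_zero, cons_val_one, hsymm] at hdet
  linarith

theorem posSemidef_sub_inv_diag_smul_vecMulVec [Finite n] (hM : M.PosSemidef) (i : n) :
    (M - (M i i)⁻¹ • vecMulVec (M i) (M i)).PosSemidef := by
  classical
  cases nonempty_fintype n
  have hrank : (vecMulVec (M i) (M i)).PosSemidef := by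
    simpa using posSemidef_vecMulVec_self_star (M i)
  have hrow : M.col i = M i := funext fun j => by simpa using hM.isHermitian.apply i j
  rcases eq_or_ne (M i i) 0 with hzero | hne
  · simpa [hzero] using hM
  refine .of_dotProduct_mulVec_nonneg
    (hM.isHermitian.sub (hrank.smul (inv_nonneg.2 hM.diag_nonneg)).isHermitian) fun v => ?_
  have hcoord : (M *ᵥ v) i = M i ⬝ᵥ v := rfl
  have := hM.dotProduct_mulVec_nonneg (v - ((M i ⬝ᵥ v) / M i i) • Pi.single i 1)
  simp only [star_trivial, mulVec_sub, mulVec_smul, sub_dotProduct, dotProduct_sub, smul_dotProduct,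
    dotProduct_smul, mulVec_single_one, hrow, single_one_dotProduct, smul_eq_mul, sub_mulVec,
    smul_mulVec, vecMulVec_mulVec, op_smul_eq_smul, dotProduct_comm v (M i)] at this ⊢
  rw [hcoord, div_mul_cancel₀ _ hne] at this
  linear_combination this

end PosSemidef

section PerspectiveCone

/-- PER as a pointed cone. -/
def perspectiveCone : PointedCone ℝ (ℝ × ℝ × ℝ) where
  carrier := PER
  zero_mem' := by simp [PER]
  add_mem' := by
    rintro ⟨a, b, c⟩ ⟨a', b', c'⟩ ⟨h, hb, hba, hac⟩ ⟨h', hb', hba', hac'⟩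
    dsimp only at h hb hba hac h' hb' hba' hac'
    have hcross := two_mul_le_add_of_sq_le_mul (r := a * a') (a := b * c') (b := b' * c)
      (mul_nonneg hb (by linarith)) (mul_nonneg hb' (by linarith))
      (by linarith [mul_le_mul h h' (sq_nonneg a') ((sq_nonneg a).trans h)])
    refine ⟨?_, add_nonneg hb hb', add_le_add hba hba', add_le_add hac hac'⟩
    change (a + a') ^ 2 ≤ (b + b') * (c + c')
    linarith
  smul_mem' := by
    rintro ⟨r, hr⟩ ⟨a, b, c⟩ ⟨h, hb, hba, hac⟩
    refine ⟨?_, mul_nonneg hr hb, mul_le_mul_of_nonneg_left hba hr,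
      mul_le_mul_of_nonneg_left hac hr⟩
    change (r * a) ^ 2 ≤ r * b * (r * c)
    linarith [mul_le_mul_of_nonneg_left h (mul_nonneg hr hr)]

@[simp]
theorem mem_perspectiveCone {p : ℝ × ℝ × ℝ} : p ∈ perspectiveCone ↔ p ∈ PER := Iff.rfl

theorem mk_mem_PER {a b c : ℝ} (hc : 0 ≤ c) (h : a ^ 2 / c ≤ b) (hba : b ≤ a) (hac : a ≤ c) :
    (a, b, c) ∈ PER := by
  have hb : 0 ≤ b := (div_nonneg (sq_nonneg a) hc).trans h
  refine ⟨?_, hb, hba, hac⟩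
  rcases hc.eq_or_lt with rfl | hpos
  · have ha : a = 0 := hac.antisymm (hb.trans hba)
    simp [ha]
  · exact (div_le_iff₀ hpos).1 h

/-- The moment curve `(t, t², 1)` of the unit interval. -/
def segmentMoments : Set (ℝ × ℝ × ℝ) := (fun t => (t, t ^ 2, 1)) '' Set.Icc 0 1

theorem perspectiveCone_eq_hull : perspectiveCone = PointedCone.hull ℝ segmentMoments := by
  refine le_antisymm ?_ (Submodule.span_le.2 ?_)
  · rintro ⟨a, b, c⟩ ⟨h, hb, hba, hac⟩
    dsimp only at h hb hba hac
    have moment_mem {t : ℝ} (h0 : 0 ≤ t) (h1 : t ≤ 1) :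
        (t, t ^ 2, 1) ∈ PointedCone.hull ℝ segmentMoments :=
      PointedCone.subset_hull ⟨t, ⟨h0, h1⟩, rfl⟩
    rcases hb.eq_or_lt with rfl | hpos
    · have ha : a = 0 := by nlinarith
      subst ha
      simpa using PointedCone.smul_mem _ hac (moment_mem le_rfl zero_le_one)
    · have ha : 0 < a := hpos.trans_le hba
      have hrest : 0 ≤ c - a ^ 2 / b := by
        rw [sub_nonneg, div_le_iff₀ hpos]
        linarith
      have hsplit : (a, b, c) =
          (a ^ 2 / b) • (b / a, (b / a) ^ 2, (1 : ℝ)) + (c - a ^ 2 / b) • ((0 : ℝ), 0 ^ 2, 1) := by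
        ext <;> simp <;> field_simp
      rw [hsplit]
      exact add_mem
        (PointedCone.smul_mem _ (by positivity)
          (moment_mem (by positivity) (div_le_one_of_le₀ hba ha.le)))
        (PointedCone.smul_mem _ hrest (moment_mem le_rfl zero_le_one))
  · rintro _ ⟨t, ⟨h0, h1⟩, rfl⟩
    exact ⟨by simp, sq_nonneg t, pow_le_of_le_one h0 h1 two_ne_zero, h1⟩

theorem vecMulVec_segment_mem {n : Type*} {C : PointedCone ℝ (Matrix n n ℝ)} {p d : n → ℝ}
    (h : ∀ t ∈ Set.Icc (0 : ℝ) 1, vecMulVec (p + t • d) (p + t • d) ∈ C)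
    {a b c : ℝ} (habc : (a, b, c) ∈ PER) :
    c • vecMulVec p p + a • (vecMulVec p d + vecMulVec d p) + b • vecMulVec d d ∈ C := by
  let lift : ℝ × ℝ × ℝ →ₗ[ℝ] Matrix n n ℝ :=
    .coprod (.toSpanSingleton ℝ _ (vecMulVec p d + vecMulVec d p))
      (.coprod (.toSpanSingleton ℝ _ (vecMulVec d d)) (.toSpanSingleton ℝ _ (vecMulVec p p)))
  have hle : PointedCone.hull ℝ segmentMoments ≤ C.comap lift := by
    refine Submodule.span_le.2 ?_
    rintro _ ⟨t, ht, rfl⟩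
    have hlift : lift (t, t ^ 2, 1) = vecMulVec (p + t • d) (p + t • d) := by
      simp only [lift, LinearMap.coprod_apply, LinearMap.toSpanSingleton_apply, add_vecMulVec,
        vecMulVec_add, smul_vecMulVec, vecMulVec_smul]
      module
    exact PointedCone.mem_comap.2 (hlift ▸ h t ht)
  have hmem : lift (a, b, c) ∈ C := hle (perspectiveCone_eq_hull ▸ habc)
  convert! hmem using 1
  simp only [lift, LinearMap.coprod_apply, LinearMap.toSpanSingleton_apply]
  module

end PerspectiveCone

section SquareMoments

/-- The moment matrix `(1, u, v)ᵀ(1, u, v)` of a point of the plane. -/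
def pointMoment (u v : ℝ) : Matrix (Fin 3) (Fin 3) ℝ := vecMulVec ![1, u, v] ![1, u, v]

/-- The cone of moment matrices of finitely supported measures on the unit square `[0, 1]²`. -/
def squareMomentCone : PointedCone ℝ (Matrix (Fin 3) (Fin 3) ℝ) :=
  PointedCone.hull ℝ (Set.image2 pointMoment (Set.Icc 0 1) (Set.Icc 0 1))

/-- The slacks of the inequalities in `RLTx`: at `pointMoment u v` they are the products of two
distinct facet forms `u`, `1 - u`, `v`, `1 - v` of the square. -/
def rltSlack : Matrix (Fin 3) (Fin 3) ℝ →ₗ[ℝ] Fin 6 → ℝ where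
  toFun M := ![M 0 1 - M 1 1, M 0 2 - M 2 2, M 1 2, M 0 1 - M 1 2, M 0 2 - M 1 2,
    M 0 0 - M 0 1 - M 0 2 + M 1 2]
  map_add' M N := by
    ext i
    fin_cases i <;> simp <;> ring
  map_smul' r M := by
    ext i
    fin_cases i <;> simp <;> ring

theorem rltSlack_nonneg_iff {M : Matrix (Fin 3) (Fin 3) ℝ} :
    0 ≤ rltSlack M ↔ (M 1 1 ≤ M 0 1 ∧ M 2 2 ≤ M 0 2) ∧ 0 ≤ M 1 2 ∧ M 1 2 ≤ M 0 1 ∧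
      M 1 2 ≤ M 0 2 ∧ M 0 1 + M 0 2 - M 0 0 ≤ M 1 2 := by
  have h : M 0 1 + M 0 2 - M 0 0 ≤ M 1 2 ↔ 0 ≤ M 0 0 - M 0 1 - M 0 2 + M 1 2 := by
    constructor <;> intro h <;> linarith
  simp [Pi.le_def, Fin.forall_fin_succ, rltSlack, h, and_assoc]

/-- The cone of positive semidefinite matrices in `RLTx`. -/
def boxRelaxation : PointedCone ℝ (Matrix (Fin 3) (Fin 3) ℝ) where
  carrier := {M | M.PosSemidef ∧ 0 ≤ rltSlack M}
  zero_mem' := ⟨.zero, by simp⟩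
  add_mem' hM hN := ⟨hM.1.add hN.1, by simpa using add_nonneg hM.2 hN.2⟩
  smul_mem' r _ hM := ⟨hM.1.smul r.2, by
    simpa [NNReal.smul_def] using smul_nonneg r.2 hM.2⟩

theorem mem_boxRelaxation {M : Matrix (Fin 3) (Fin 3) ℝ} :
    M ∈ boxRelaxation ↔ M.PosSemidef ∧ 0 ≤ rltSlack M := Iff.rfl

theorem mem_boxRelaxation_iff_mem_RLTx {M : Matrix (Fin 3) (Fin 3) ℝ} :
    M ∈ boxRelaxation ↔ M.PosSemidef ∧ M ∈ RLTx := by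
  simp only [mem_boxRelaxation, rltSlack_nonneg_iff, RLTx, Set.mem_ofPred_eq, max_le_iff,
    le_min_iff]
  constructor
  · rintro ⟨hM, ⟨h₁, h₂⟩, hC, hC₁, hC₂, hlow⟩
    exact ⟨hM, by simpa using hM.isHermitian, hM.diag_nonneg, hM.diag_nonneg, h₁, hM.diag_nonneg,
      h₂, ⟨hC, hlow⟩, hC₁, hC₂⟩
  · rintro ⟨hM, -, -, -, h₁, -, h₂, ⟨hC, hlow⟩, hC₁, hC₂⟩
    exact ⟨hM, ⟨h₁, h₂⟩, hC, hC₁, hC₂, hlow⟩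

theorem first_moments_le_mass {M : Matrix (Fin 3) (Fin 3) ℝ} (hM : M ∈ boxRelaxation) :
    M 0 1 ≤ M 0 0 ∧ M 0 2 ≤ M 0 0 := by
  obtain ⟨-, -, hCa, hCb, hlow⟩ := rltSlack_nonneg_iff.1 hM.2
  constructor <;> linarith

theorem pointMoment_mem_squareMomentCone {u v : ℝ} (hu : u ∈ Set.Icc (0 : ℝ) 1)
    (hv : v ∈ Set.Icc (0 : ℝ) 1) : pointMoment u v ∈ squareMomentCone :=
  PointedCone.subset_hull ⟨u, hu, v, hv, rfl⟩

theorem squareMomentCone_le_boxRelaxation : squareMomentCone ≤ boxRelaxation := by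
  refine Submodule.span_le.2 ?_
  rintro _ ⟨u, ⟨hu₀, hu₁⟩, v, ⟨hv₀, hv₁⟩, rfl⟩
  refine ⟨by simpa [pointMoment] using posSemidef_vecMulVec_self_star ![1, u, v],
    rltSlack_nonneg_iff.2 ?_⟩
  simp only [pointMoment, vecMulVec_apply, cons_val]
  refine ⟨⟨?_, ?_⟩, ?_, ?_, ?_, ?_⟩ <;> nlinarith

/-- An affine symmetry of the square as the linear map `T` of the coordinates `(1, u, v)`, together
with the permutation `σ` of the slacks that it induces. -/
structure IsSquareSymmetry (T : Matrix (Fin 3) (Fin 3) ℝ) (σ : Fin 6 → Fin 6) : Prop where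
  mul_self : T * T = 1
  exists_mulVec_eq : ∀ u ∈ Set.Icc (0 : ℝ) 1, ∀ v ∈ Set.Icc (0 : ℝ) 1,
    ∃ u' ∈ Set.Icc (0 : ℝ) 1, ∃ v' ∈ Set.Icc (0 : ℝ) 1, T *ᵥ ![1, u, v] = ![1, u', v']
  rltSlack_conj : ∀ M : Matrix (Fin 3) (Fin 3) ℝ, M.IsSymm →
    rltSlack (T * M * Tᵀ) = rltSlack M ∘ σ

theorem isSquareSymmetry_swap :
    IsSquareSymmetry !![1, 0, 0; 0, 0, 1; 0, 1, 0] ![1, 0, 2, 4, 3, 5] where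
  mul_self := by
    ext i j
    fin_cases i <;> fin_cases j <;> simp [mul_apply, Fin.sum_univ_three]
  exists_mulVec_eq u hu v hv := ⟨v, hv, u, hu, by
    ext i
    fin_cases i <;> simp [mulVec, dotProduct, Fin.sum_univ_three]⟩
  rltSlack_conj M hM := by
    have h := hM.apply 1 2
    ext i
    fin_cases i <;>
      simp only [rltSlack, LinearMap.coe_mk, AddHom.coe_mk, mul_apply, transpose_apply,
        Fin.sum_univ_three] <;>
      simp [h, sub_right_comm]

theorem isSquareSymmetry_flip :
    IsSquareSymmetry !![1, 0, 0; 1, -1, 0; 0, 0, 1] ![0, 1, 4, 5, 2, 3] where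
  mul_self := by
    ext i j
    fin_cases i <;> fin_cases j <;> simp [mul_apply, Fin.sum_univ_three]
  exists_mulVec_eq u hu v hv :=
    ⟨1 - u, ⟨by linarith [hu.2], by linarith [hu.1]⟩, v, hv, by
      ext i
      fin_cases i <;> simp [mulVec, dotProduct, Fin.sum_univ_three, sub_eq_add_neg]⟩
  rltSlack_conj M hM := by
    have h := hM.apply 0 1
    ext i
    fin_cases i <;>
      simp only [rltSlack, LinearMap.coe_mk, AddHom.coe_mk, mul_apply, transpose_apply,
        Fin.sum_univ_three] <;>
      simp [h] <;>
      ring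

namespace IsSquareSymmetry

variable {T M : Matrix (Fin 3) (Fin 3) ℝ} {σ : Fin 6 → Fin 6}

theorem conj_mem_squareMomentCone (hT : IsSquareSymmetry T σ) (hM : M ∈ squareMomentCone) :
    T * M * Tᵀ ∈ squareMomentCone := by
  let conj : Matrix (Fin 3) (Fin 3) ℝ →ₗ[ℝ] Matrix (Fin 3) (Fin 3) ℝ :=
    LinearMap.mulRight ℝ Tᵀ ∘ₗ LinearMap.mulLeft ℝ T
  have hle : squareMomentCone ≤ squareMomentCone.comap conj := by
    refine Submodule.span_le.2 ?_
    rintro _ ⟨u, hu, v, hv, rfl⟩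
    obtain ⟨u', hu', v', hv', hT'⟩ := hT.exists_mulVec_eq u hu v hv
    have hconj : conj (pointMoment u v) = pointMoment u' v' := by
      simp only [conj, pointMoment, LinearMap.comp_apply, LinearMap.mulLeft_apply,
        LinearMap.mulRight_apply, mul_vecMulVec, vecMulVec_mul, vecMul_transpose, hT']
    exact PointedCone.mem_comap.2 (hconj ▸ pointMoment_mem_squareMomentCone hu' hv')
  exact hle hM

theorem conj_mem_boxRelaxation (hT : IsSquareSymmetry T σ) (hM : M ∈ boxRelaxation) :
    T * M * Tᵀ ∈ boxRelaxation := by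
  refine ⟨by simpa using hM.1.mul_mul_conjTranspose_same T, ?_⟩
  rw [hT.rltSlack_conj M (by simpa using hM.1.isHermitian)]
  exact fun i => hM.2 (σ i)

theorem mem_squareMomentCone_of_rltSlack_eq_zero (hT : IsSquareSymmetry T σ) {i : Fin 6}
    (h : ∀ N ∈ boxRelaxation, rltSlack N i = 0 → N ∈ squareMomentCone)
    (hM : M ∈ boxRelaxation) (hzero : rltSlack M (σ i) = 0) : M ∈ squareMomentCone := by
  have hconj := hT.conj_mem_squareMomentCone <| h _ (hT.conj_mem_boxRelaxation hM) <| by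
    rwa [hT.rltSlack_conj M (by simpa using hM.1.isHermitian)]
  have hinv : T * (T * M * Tᵀ) * Tᵀ = M := by
    rw [Matrix.mul_assoc T M, ← Matrix.mul_assoc T T, hT.mul_self, Matrix.one_mul,
      Matrix.mul_assoc, ← transpose_mul, hT.mul_self, transpose_one, Matrix.mul_one]
  rwa [hinv] at hconj

end IsSquareSymmetry

theorem eq_of_symm_fin_three {M : Matrix (Fin 3) (Fin 3) ℝ} (hM : M.IsSymm) :
    M = !![M 0 0, M 0 1, M 0 2; M 0 1, M 1 1, M 1 2; M 0 2, M 1 2, M 2 2] := by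
  have h₁ := hM.apply 0 1
  have h₂ := hM.apply 0 2
  have h₃ := hM.apply 1 2
  ext i j
  fin_cases i <;> fin_cases j <;> simp [h₁, h₂, h₃]

theorem quadraticForm_nonneg {M : Matrix (Fin 3) (Fin 3) ℝ} (hM : M.PosSemidef) (x y z : ℝ) :
    0 ≤ M 0 0 * x ^ 2 + M 1 1 * y ^ 2 + M 2 2 * z ^ 2 +
      2 * (M 0 1 * x * y + M 0 2 * x * z + M 1 2 * y * z) := by
  have hsymm : M.IsSymm := by simpa using hM.isHermitian
  have := hM.dotProduct_mulVec_nonneg ![x, y, z]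
  simp only [star_trivial, mulVec, dotProduct, Fin.sum_univ_three, cons_val, hsymm.apply 0 1,
    hsymm.apply 0 2, hsymm.apply 1 2] at this
  linarith

theorem mem_squareMomentCone_of_segment {p d : Fin 3 → ℝ}
    (h : ∀ t ∈ Set.Icc (0 : ℝ) 1, ∃ u ∈ Set.Icc (0 : ℝ) 1, ∃ v ∈ Set.Icc (0 : ℝ) 1,
      p + t • d = ![1, u, v]) {a b c : ℝ} (habc : (a, b, c) ∈ PER) :
    c • vecMulVec p p + a • (vecMulVec p d + vecMulVec d p) + b • vecMulVec d d ∈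
      squareMomentCone := by
  refine vecMulVec_segment_mem (fun t ht => ?_) habc
  obtain ⟨u, hu, v, hv, hpoint⟩ := h t ht
  exact hpoint ▸ pointMoment_mem_squareMomentCone hu hv

theorem vertical_edge_mem_squareMomentCone {u : ℝ} (hu : u ∈ Set.Icc (0 : ℝ) 1) {a b c : ℝ}
    (habc : (a, b, c) ∈ PER) :
    !![c, c * u, a; c * u, c * u ^ 2, a * u; a, a * u, b] ∈ squareMomentCone := by
  convert! mem_squareMomentCone_of_segment (p := ![1, u, 0]) (d := ![0, 0, 1])
    (fun t ht => ⟨u, hu, t, ht, by simp⟩) habc using 1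
  ext i j
  fin_cases i <;> fin_cases j <;> simp [pow_two]

theorem bottom_edge_mem_squareMomentCone {a b c : ℝ} (habc : (a, b, c) ∈ PER) :
    !![c, a, 0; a, b, 0; 0, 0, 0] ∈ squareMomentCone := by
  convert! mem_squareMomentCone_of_segment (p := ![1, 0, 0]) (d := ![0, 1, 0])
    (fun t ht => ⟨t, ht, 0, by simp, by simp⟩) habc using 1
  ext i j
  fin_cases i <;> fin_cases j <;> simp

open scoped Pointwise in
theorem mem_squareMomentCone_of_rltSlack_zero_eq_zero {M : Matrix (Fin 3) (Fin 3) ℝ}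
    (hM : M ∈ boxRelaxation) (hzero : rltSlack M 0 = 0) : M ∈ squareMomentCone := by
  obtain ⟨hpsd, hslack⟩ := hM
  have hsymm : M.IsSymm := by simpa using hpsd.isHermitian
  obtain ⟨⟨-, hB⟩, hC, hCa, hCb, hlow⟩ := rltSlack_nonneg_iff.1 hslack
  have hAa : M 1 1 = M 0 1 := (sub_eq_zero.1 hzero).symm
  have harrow : (M 0 2 - M 1 2) ^ 2 / (M 0 0 - M 0 1) + M 1 2 ^ 2 / M 0 1 ≤ M 2 2 := by
    refine sq_div_add_sq_div_le_of_forall_nonneg fun x y => ?_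
    have := quadraticForm_nonneg hpsd x (y - x) 1
    rw [hAa] at this
    linarith
  have hmass₁ : 0 ≤ M 0 1 := hC.trans hCa
  have hmass₀ : 0 ≤ M 0 0 - M 0 1 := by linarith
  have hmin₁ : M 1 2 ^ 2 / M 0 1 ≤ M 1 2 :=
    div_le_of_le_mul₀ hmass₁ hC (by nlinarith)
  have hmin₀ : (M 0 2 - M 1 2) ^ 2 / (M 0 0 - M 0 1) ≤ M 0 2 - M 1 2 :=
    div_le_of_le_mul₀ hmass₀ (by linarith) (by nlinarith)
  obtain ⟨b₁, ⟨hlow₁, hup₁⟩, b₀, ⟨hlow₀, hup₀⟩, hb⟩ : M 2 2 ∈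
      Set.Icc (M 1 2 ^ 2 / M 0 1) (M 1 2) +
        Set.Icc ((M 0 2 - M 1 2) ^ 2 / (M 0 0 - M 0 1)) (M 0 2 - M 1 2) := by
    rw [Set.Icc_add_Icc hmin₁ hmin₀]
    exact ⟨by linarith, by linarith⟩
  have hsplit : M =
      !![M 0 1, M 0 1 * 1, M 1 2; M 0 1 * 1, M 0 1 * 1 ^ 2, M 1 2 * 1; M 1 2, M 1 2 * 1, b₁] +
      !![M 0 0 - M 0 1, (M 0 0 - M 0 1) * 0, M 0 2 - M 1 2;
        (M 0 0 - M 0 1) * 0, (M 0 0 - M 0 1) * 0 ^ 2, (M 0 2 - M 1 2) * 0;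
        M 0 2 - M 1 2, (M 0 2 - M 1 2) * 0, b₀] := by
    refine (eq_of_symm_fin_three hsymm).trans ?_
    ext i j
    fin_cases i <;> fin_cases j <;> simp [hAa, ← hb, add_comm]
  rw [hsplit]
  exact add_mem
    (vertical_edge_mem_squareMomentCone (by simp) (mk_mem_PER hmass₁ hlow₁ hup₁ hCa))
    (vertical_edge_mem_squareMomentCone (by simp)
      (mk_mem_PER hmass₀ hlow₀ hup₀ (by linarith)))

theorem mem_squareMomentCone_of_rltSlack_two_eq_zero {M : Matrix (Fin 3) (Fin 3) ℝ}
    (hM : M ∈ boxRelaxation) (hzero : rltSlack M 2 = 0) : M ∈ squareMomentCone := by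
  obtain ⟨hpsd, hslack⟩ := hM
  have hsymm : M.IsSymm := by simpa using hpsd.isHermitian
  obtain ⟨⟨hA, hB⟩, -⟩ := rltSlack_nonneg_iff.1 hslack
  have hC : M 1 2 = 0 := hzero
  have harrow : M 0 1 ^ 2 / M 1 1 + M 0 2 ^ 2 / M 2 2 ≤ M 0 0 := by
    refine sq_div_add_sq_div_le_of_forall_nonneg fun x y => ?_
    have := quadraticForm_nonneg hpsd 1 x y
    rw [hC] at this
    linarith
  have edge_mem_PER {i : Fin 3} (hi : M i i ≤ M 0 i) :
      (M 0 i, M i i, M 0 i ^ 2 / M i i) ∈ PER := by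
    have hdiag : 0 ≤ M i i := hpsd.diag_nonneg
    have hsq := sq_apply_le_diag_mul_diag_of_posSemidef hpsd 0 i
    rcases hdiag.eq_or_lt with h0 | hpos
    · have : M 0 i = 0 := by simpa [← h0] using hsq
      simp [this, ← h0, PER]
    · refine ⟨(mul_div_cancel₀ _ hpos.ne').ge, hdiag, hi, ?_⟩
      exact (le_div_iff₀ hpos).2 (by nlinarith)
  have hsplit : M =
      !![M 0 1 ^ 2 / M 1 1, M 0 1, 0; M 0 1, M 1 1, 0; 0, 0, 0] +
      !![M 0 2 ^ 2 / M 2 2, M 0 2 ^ 2 / M 2 2 * 0, M 0 2;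
        M 0 2 ^ 2 / M 2 2 * 0, M 0 2 ^ 2 / M 2 2 * 0 ^ 2, M 0 2 * 0; M 0 2, M 0 2 * 0, M 2 2] +
      (M 0 0 - M 0 1 ^ 2 / M 1 1 - M 0 2 ^ 2 / M 2 2) • pointMoment 0 0 := by
    refine (eq_of_symm_fin_three hsymm).trans ?_
    ext i j
    fin_cases i <;> fin_cases j <;> simp [hC, pointMoment]
  rw [hsplit]
  exact add_mem
    (add_mem (bottom_edge_mem_squareMomentCone (edge_mem_PER hA))
      (vertical_edge_mem_squareMomentCone (by simp) (edge_mem_PER hB)))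
    (PointedCone.smul_mem _ (by linarith) (pointMoment_mem_squareMomentCone (by simp) (by simp)))

theorem mem_squareMomentCone_of_exists_rltSlack_eq_zero {M : Matrix (Fin 3) (Fin 3) ℝ}
    (hM : M ∈ boxRelaxation) (hzero : ∃ i, rltSlack M i = 0) : M ∈ squareMomentCone := by
  have h₀ : ∀ N ∈ boxRelaxation, rltSlack N 0 = 0 → N ∈ squareMomentCone :=
    fun _ => mem_squareMomentCone_of_rltSlack_zero_eq_zero
  have h₁ : ∀ N ∈ boxRelaxation, rltSlack N 1 = 0 → N ∈ squareMomentCone :=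
    fun _ => isSquareSymmetry_swap.mem_squareMomentCone_of_rltSlack_eq_zero h₀
  have h₂ : ∀ N ∈ boxRelaxation, rltSlack N 2 = 0 → N ∈ squareMomentCone :=
    fun _ => mem_squareMomentCone_of_rltSlack_two_eq_zero
  have h₄ : ∀ N ∈ boxRelaxation, rltSlack N 4 = 0 → N ∈ squareMomentCone :=
    fun _ => isSquareSymmetry_flip.mem_squareMomentCone_of_rltSlack_eq_zero h₂
  have h₃ : ∀ N ∈ boxRelaxation, rltSlack N 3 = 0 → N ∈ squareMomentCone :=
    fun _ => isSquareSymmetry_swap.mem_squareMomentCone_of_rltSlack_eq_zero h₄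
  have h₅ : ∀ N ∈ boxRelaxation, rltSlack N 5 = 0 → N ∈ squareMomentCone :=
    fun _ => isSquareSymmetry_flip.mem_squareMomentCone_of_rltSlack_eq_zero h₃
  obtain ⟨i, hi⟩ := hzero
  fin_cases i
  exacts [h₀ M hM hi, h₁ M hM hi, h₂ M hM hi, h₃ M hM hi, h₄ M hM hi, h₅ M hM hi]

/-- The moment matrix of the point mass of weight `M 0 0` at the barycentre
`(M 0 1 / M 0 0, M 0 2 / M 0 0)`; it is `0` if `M 0 0 = 0`. -/
noncomputable def meanMoment (M : Matrix (Fin 3) (Fin 3) ℝ) : Matrix (Fin 3) (Fin 3) ℝ :=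
  M 0 0 • pointMoment (M 0 1 / M 0 0) (M 0 2 / M 0 0)

theorem meanMoment_mem_squareMomentCone {M : Matrix (Fin 3) (Fin 3) ℝ} (hM : M ∈ boxRelaxation) :
    meanMoment M ∈ squareMomentCone := by
  obtain ⟨-, hC, hCa, hCb, -⟩ := rltSlack_nonneg_iff.1 hM.2
  obtain ⟨ha, hb⟩ := first_moments_le_mass hM
  have hmass : 0 ≤ M 0 0 := hM.1.diag_nonneg
  exact PointedCone.smul_mem _ hmass (pointMoment_mem_squareMomentCone
    ⟨div_nonneg (hC.trans hCa) hmass, div_le_one_of_le₀ ha hmass⟩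
    ⟨div_nonneg (hC.trans hCb) hmass, div_le_one_of_le₀ hb hmass⟩)

theorem posSemidef_sub_meanMoment {M : Matrix (Fin 3) (Fin 3) ℝ} (hM : M.PosSemidef) :
    (M - meanMoment M).PosSemidef := by
  rcases eq_or_ne (M 0 0) 0 with hzero | hne
  · simpa [meanMoment, hzero] using hM
  convert! posSemidef_sub_inv_diag_smul_vecMulVec hM 0 using 2
  ext i j
  fin_cases i <;> fin_cases j <;> simp [meanMoment, pointMoment, vecMulVec_apply] <;> field_simp

theorem exists_rltSlack_le_rltSlack_meanMoment {M : Matrix (Fin 3) (Fin 3) ℝ}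
    (hM : M ∈ boxRelaxation) : ∃ i, rltSlack M i ≤ rltSlack (meanMoment M) i := by
  have hdiag : meanMoment M 1 1 ≤ M 1 1 :=
    sub_nonneg.1 (posSemidef_sub_meanMoment hM.1).diag_nonneg
  have hmean : M 0 1 ≤ meanMoment M 0 1 := by
    rcases eq_or_ne (M 0 0) 0 with hzero | hne
    · simpa [meanMoment, hzero] using (first_moments_le_mass hM).1
    · simp [meanMoment, pointMoment, mul_div_cancel₀ _ hne]
  exact ⟨0, sub_le_sub hmean hdiag⟩

theorem boxRelaxation_le_squareMomentCone : boxRelaxation ≤ squareMomentCone := by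
  intro M hM
  have hmean := meanMoment_mem_squareMomentCone hM
  obtain ⟨t, ⟨ht₀, ht₁⟩, hle, hzero⟩ := exists_mem_Icc_mul_le_and_eq hM.2
    (exists_rltSlack_le_rltSlack_meanMoment hM)
  have hrest : M - t • meanMoment M ∈ boxRelaxation := by
    constructor
    · convert! (posSemidef_sub_meanMoment hM.1).add
        ((squareMomentCone_le_boxRelaxation hmean).1.smul (sub_nonneg.2 ht₁)) using 1
      module
    · intro i
      simpa using hle i
  have hrest' : M - t • meanMoment M ∈ squareMomentCone := by
    obtain ⟨i, hi⟩ := hzero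
    exact mem_squareMomentCone_of_exists_rltSlack_eq_zero hrest ⟨i, by simp [hi]⟩
  simpa using add_mem hrest' (PointedCone.smul_mem _ ht₀ hmean)

theorem boxRelaxation_eq_squareMomentCone : boxRelaxation = squareMomentCone :=
  boxRelaxation_le_squareMomentCone.antisymm squareMomentCone_le_boxRelaxation

end SquareMoments

section DisjunctiveHull

/-- The space of the vectors `(x, X, y, Y₁₂)`. -/
abbrev LiftedSpace : Type := (Fin 2 → ℝ) × Matrix (Fin 2) (Fin 2) ℝ × (Fin 2 → ℝ) × ℝ

/-- The vector `(x, xxᵀ, y, y₁y₂)`. -/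
def liftPoint (x y : Fin 2 → ℝ) : LiftedSpace := (x, vecMulVec x x, y, y 0 * y 1)

/-- The vectors whose convex hull is `Hset`. -/
def liftedPoints : Set LiftedSpace :=
  {p | ∃ x y : Fin 2 → ℝ, (∀ i, 0 ≤ x i) ∧ (∀ i, x i ≤ y i) ∧ (∀ i, y i = 0 ∨ y i = 1) ∧
    p = liftPoint x y}

/-- The cone over the lifted points with `y = (1, 1)`, homogenised by a leading coordinate `1`, is
the image under this map of the cone of moment matrices of `x`. -/
@[simps]
def fullLift : Matrix (Fin 3) (Fin 3) ℝ →ₗ[ℝ] ℝ × LiftedSpace where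
  toFun M := (M 0 0, ![M 0 1, M 0 2], !![M 1 1, M 1 2; M 2 1, M 2 2], ![M 0 0, M 0 0], M 0 0)
  map_add' M N := by simp
  map_smul' r M := by simp

/-- The cone over the lifted points with `y` the `j`-th unit vector, homogenised by a leading
coordinate `1`, is the image under this map of the cone of moments of `x j`. -/
@[simps]
def singleLift (j : Fin 2) : ℝ × ℝ × ℝ →ₗ[ℝ] ℝ × LiftedSpace where
  toFun q := (q.2.2, Pi.single j q.1, Matrix.single j j q.2.1, Pi.single j q.2.2, 0)
  map_add' q q' := by simp [Pi.single_add, Matrix.single_add]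
  map_smul' r q := by simp [← Pi.single_smul', Matrix.smul_single]

theorem fullLift_pointMoment (u v : ℝ) :
    fullLift (pointMoment u v) = (1, liftPoint ![u, v] ![1, 1]) := by
  have : (!![u * u, u * v; v * u, v * v] : Matrix (Fin 2) (Fin 2) ℝ) =
      vecMulVec ![u, v] ![u, v] := by
    ext i j
    fin_cases i <;> fin_cases j <;> rfl
  simp [pointMoment, liftPoint, this]

theorem singleLift_moment (j : Fin 2) (t : ℝ) :
    singleLift j (t, t ^ 2, 1) = (1, liftPoint (Pi.single j t) (Pi.single j 1)) := by
  have hx : Matrix.single j j (t ^ 2) = vecMulVec (Pi.single j t) (Pi.single j t) := by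
    ext i k
    fin_cases j <;> fin_cases i <;> fin_cases k <;> simp [vecMulVec_apply, pow_two]
  have hy : (Pi.single j 1 : Fin 2 → ℝ) 0 * (Pi.single j 1 : Fin 2 → ℝ) 1 = 0 := by
    fin_cases j <;> simp
  simp [liftPoint, hx, hy]

theorem singleLift_mem_image_liftedPoints (j : Fin 2) {q : ℝ × ℝ × ℝ} (hq : q ∈ segmentMoments) :
    singleLift j q ∈ Prod.mk (1 : ℝ) '' liftedPoints := by
  obtain ⟨t, ⟨ht₀, ht₁⟩, rfl⟩ := hq
  refine ⟨_, ⟨Pi.single j t, Pi.single j 1, fun i => ?_, fun i => ?_, fun i => ?_, rfl⟩,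
    (singleLift_moment j t).symm⟩ <;>
  rcases eq_or_ne i j with rfl | hij <;>
  simp [*]

theorem image_mk_one_liftedPoints :
    Prod.mk (1 : ℝ) '' liftedPoints =
      fullLift '' Set.image2 pointMoment (Set.Icc 0 1) (Set.Icc 0 1) ∪
        (singleLift 0 '' segmentMoments ∪ (singleLift 1 '' segmentMoments ∪ {(1, 0)})) := by
  apply Set.Subset.antisymm
  · rintro _ ⟨_, ⟨x, y, hx, hxy, hy, rfl⟩, rfl⟩
    have eq_single {z : Fin 2 → ℝ} (h : z 1 = 0) : z = Pi.single 0 (z 0) := by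
      simp [funext_iff, Fin.forall_fin_two, h]
    have eq_single' {z : Fin 2 → ℝ} (h : z 0 = 0) : z = Pi.single 1 (z 1) := by
      simp [funext_iff, Fin.forall_fin_two, h]
    have hx_zero {i : Fin 2} (h : y i = 0) : x i = 0 := le_antisymm (h ▸ hxy i) (hx i)
    rcases hy 0 with h₀ | h₀ <;> rcases hy 1 with h₁ | h₁
    · refine .inr (.inr (.inr ?_))
      have hx₀ : x = 0 := by
        simp [funext_iff, Fin.forall_fin_two, hx_zero, h₀, h₁]
      have hy₀ : y = 0 := by
        simp [funext_iff, Fin.forall_fin_two, h₀, h₁]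
      simp [hx₀, hy₀, liftPoint]
    · refine .inr (.inr (.inl ⟨_, ⟨x 1, ⟨hx 1, h₁ ▸ hxy 1⟩, rfl⟩, ?_⟩))
      rw [singleLift_moment, ← h₁, ← eq_single' (hx_zero h₀), ← eq_single' h₀]
    · refine .inr (.inl ⟨_, ⟨x 0, ⟨hx 0, h₀ ▸ hxy 0⟩, rfl⟩, ?_⟩)
      rw [singleLift_moment, ← h₀, ← eq_single (hx_zero h₁), ← eq_single h₁]
    · refine .inl ⟨_, ⟨x 0, ⟨hx 0, h₀ ▸ hxy 0⟩, x 1, ⟨hx 1, h₁ ▸ hxy 1⟩, rfl⟩, ?_⟩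
      have hx_eta : ![x 0, x 1] = x := FinVec.etaExpand_eq x
      have hy_eta : ![1, 1] = y := by
        simp [funext_iff, Fin.forall_fin_two, h₀, h₁]
      rw [fullLift_pointMoment, hx_eta, hy_eta]
  · rintro _ (⟨_, ⟨u, hu, v, hv, rfl⟩, rfl⟩ | ⟨q, hq, rfl⟩ | ⟨q, hq, rfl⟩ | rfl)
    · exact ⟨_, ⟨![u, v], ![1, 1], by simp [Fin.forall_fin_two, hu.1, hv.1],
        by simp [Fin.forall_fin_two, hu.2, hv.2], by simp [Fin.forall_fin_two], rfl⟩,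
        (fullLift_pointMoment u v).symm⟩
    · exact singleLift_mem_image_liftedPoints 0 hq
    · exact singleLift_mem_image_liftedPoints 1 hq
    · exact ⟨_, ⟨0, 0, by simp, by simp, by simp, rfl⟩, by simp [liftPoint]⟩

theorem hull_liftedPoints :
    PointedCone.hull ℝ (Prod.mk (1 : ℝ) '' liftedPoints) =
      boxRelaxation.map fullLift ⊔ (perspectiveCone.map (singleLift 0) ⊔
        (perspectiveCone.map (singleLift 1) ⊔ PointedCone.hull ℝ {(1, 0)})) := by
  rw [image_mk_one_liftedPoints, boxRelaxation_eq_squareMomentCone, squareMomentCone,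
    perspectiveCone_eq_hull]
  simp only [pointedCone_map_hull, PointedCone.hull, Submodule.span_union]

theorem mem_Hset_iff_exists_lift {p : LiftedSpace} :
    p ∈ Hset ↔ ∃ M ∈ boxRelaxation, ∃ q₀ ∈ PER, ∃ q₁ ∈ PER, ∃ r : ℝ, 0 ≤ r ∧
      fullLift M + (singleLift 0 q₀ + (singleLift 1 q₁ + r • (1, 0))) = (1, p) := by
  have hp : p ∈ Hset ↔ (1, p) ∈ PointedCone.hull ℝ (Prod.mk (1 : ℝ) '' liftedPoints) :=
    mem_convexHull_iff_mk_one_mem_hull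
  rw [hp, hull_liftedPoints]
  simp only [Submodule.mem_sup, PointedCone.mem_map, Submodule.mem_span_singleton,
    exists_exists_and_eq_and, mem_perspectiveCone, exists_exists_eq_and]
  constructor
  · rintro ⟨M, hM, _, ⟨q₀, h₀, _, ⟨q₁, h₁, r, rfl⟩, rfl⟩, heq⟩
    exact ⟨M, hM, q₀, h₀, q₁, h₁, r, r.2, heq⟩
  · rintro ⟨M, hM, q₀, h₀, q₁, h₁, r, hr, heq⟩
    exact ⟨M, hM, _, ⟨q₀, h₀, _, ⟨q₁, h₁, ⟨r, hr⟩, rfl⟩, rfl⟩, heq⟩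

theorem fullLift_add_singleLift_add (M : Matrix (Fin 3) (Fin 3) ℝ) (q₀ q₁ : ℝ × ℝ × ℝ) (r : ℝ) :
    fullLift M + (singleLift 0 q₀ + (singleLift 1 q₁ + r • (1, 0))) =
      (M 0 0 + (q₀.2.2 + (q₁.2.2 + r)), ![M 0 1 + q₀.1, M 0 2 + q₁.1],
        !![M 1 1 + q₀.2.1, M 1 2; M 2 1, M 2 2 + q₁.2.1],
        ![M 0 0 + q₀.2.2, M 0 0 + q₁.2.2], M 0 0) := by
  simp only [fullLift_apply, singleLift_apply, Prod.smul_mk, smul_zero, Prod.mk_add_mk, smul_eq_mul,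
    mul_one, add_zero, Prod.mk.injEq, true_and, and_true]
  refine ⟨?_, ?_, ?_⟩
  · ext i
    fin_cases i <;> simp
  · ext i j
    fin_cases i <;> fin_cases j <;> simp
  · ext i
    fin_cases i <;> simp

theorem mk_mem_Hset_iff {x y : Fin 2 → ℝ} {X : Matrix (Fin 2) (Fin 2) ℝ} {Y : ℝ} :
    (x, X, y, Y) ∈ Hset ↔ X.IsSymm ∧ ∃ α β : Fin 2 → ℝ,
      !![Y, x 0 - α 0, x 1 - α 1;
         x 0 - α 0, X 0 0 - β 0, X 0 1;
         x 1 - α 1, X 1 0, X 1 1 - β 1] ∈ boxRelaxation ∧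
      (∀ j, (α j, β j, y j - Y) ∈ PER) ∧ y 0 + y 1 - 1 ≤ Y := by
  simp only [mem_Hset_iff_exists_lift, fullLift_add_singleLift_add]
  constructor
  · rintro ⟨M, hM, ⟨a₀, b₀, c₀⟩, h₀, ⟨a₁, b₁, c₁⟩, h₁, r, hr, heq⟩
    have hsymm : M.IsSymm := by simpa using hM.1.isHermitian
    simp only [Prod.mk.injEq] at heq
    obtain ⟨hmass, rfl, rfl, rfl, rfl⟩ := heq
    have hmatrix : !![M 0 0, M 0 1, M 0 2; M 0 1, M 1 1, M 1 2; M 0 2, M 2 1, M 2 2] = M := by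
      rw [hsymm.apply 1 2, ← eq_of_symm_fin_three hsymm]
    refine ⟨?_, ![a₀, a₁], ![b₀, b₁], ?_, ?_, ?_⟩
    · exact IsSymm.ext fun i j => by
        fin_cases i <;> fin_cases j <;> simp [hsymm.apply 1 2]
    · simpa [hmatrix] using hM
    · simp [Fin.forall_fin_two, h₀, h₁]
    · simp only [cons_val]
      linarith
  · rintro ⟨-, α, β, hM, hα, hY⟩
    refine ⟨_, hM, _, hα 0, _, hα 1, 1 - y 0 - y 1 + Y, by linarith, ?_⟩
    have vec_eta (z : Fin 2 → ℝ) : ![z 0, z 1] = z := FinVec.etaExpand_eq z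
    have matrix_eta : of ![X 0, X 1] = X := FinVec.etaExpand_eq X
    simp [vec_eta, matrix_eta]

end DisjunctiveHull

/-- Disjunctive representation of 𝓗 (Theorem 2 of the paper). -/
theorem stmt3 :
    Hset = {p : (Fin 2 → ℝ) × Matrix (Fin 2) (Fin 2) ℝ × (Fin 2 → ℝ) × ℝ |
      p.2.1.IsSymm ∧ ∃ α β : Fin 2 → ℝ,
        (∀ i, p.1 i ≤ p.2.2.1 i) ∧
        ((!![p.2.2.2, p.1 0 - α 0, p.1 1 - α 1;
             p.1 0 - α 0, p.2.1 0 0 - β 0, p.2.1 0 1;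
             p.1 1 - α 1, p.2.1 1 0, p.2.1 1 1 - β 1] :
            Matrix (Fin 3) (Fin 3) ℝ).PosSemidef ∧
          (!![p.2.2.2, p.1 0 - α 0, p.1 1 - α 1;
              p.1 0 - α 0, p.2.1 0 0 - β 0, p.2.1 0 1;
              p.1 1 - α 1, p.2.1 1 0, p.2.1 1 1 - β 1] :
            Matrix (Fin 3) (Fin 3) ℝ) ∈ RLTx) ∧
        (∀ j : Fin 2, (α j, β j, p.2.2.1 j - p.2.2.2) ∈ PER) ∧
        (p.2.2.1, p.2.2.2) ∈ RLTy} := by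
  ext ⟨x, X, y, Y⟩
  simp only [mk_mem_Hset_iff, Set.mem_ofPred_eq, mem_boxRelaxation_iff_mem_RLTx]
  constructor
  · rintro ⟨hX, α, β, hM, hper, hlow⟩
    have hx : ∀ j, x j - α j ≤ Y :=
      Fin.forall_fin_two.2 (first_moments_le_mass (mem_boxRelaxation_iff_mem_RLTx.2 hM))
    have hY : 0 ≤ Y := hM.2.2.1
    have hα : ∀ j, α j ≤ y j - Y := fun j => (hper j).2.2.2
    have hα₀ : ∀ j, 0 ≤ α j := fun j => (hper j).2.1.trans (hper j).2.2.1
    have hy : ∀ j, Y ≤ y j := fun j => sub_nonneg.1 ((hα₀ j).trans (hα j))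
    exact ⟨hX, α, β, fun j => by linarith [hx j, hα j], hM, hper, max_le hY hlow,
      le_min (hy 0) (hy 1)⟩
  · rintro ⟨hX, α, β, -, hM, hper, hY⟩
    exact ⟨hX, α, β, hM, hper, (le_max_right _ _).trans hY.1⟩
end

section
/- 𝓗 equals the set of all (x, X, y, Y₁₂) for which there exists α ∈ ℝ² such that (x, X, y, Y₁₂, α) satisfies the linear conditions (L) and the PSD conditions (P3), (P4a), (P4b), and (P5). -/
open Matrix

/-- Linear conditions (L). -/
def Lcond (x1 x2 X11 X12 X22 y1 y2 Y12 a1 a2 : ℝ) : Prop :=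
  X11 ≤ x1 ∧ x1 ≤ y1 ∧ X22 ≤ x2 ∧ x2 ≤ y2 ∧
  max 0 (x1 - a1 + x2 - a2 - Y12) ≤ X12 ∧ X12 ≤ min (x1 - a1) (x2 - a2) ∧
  0 ≤ a1 ∧ a1 ≤ y1 - Y12 ∧ 0 ≤ a2 ∧ a2 ≤ y2 - Y12 ∧
  max 0 (y1 + y2 - 1) ≤ Y12 ∧ Y12 ≤ min y1 y2

/-- PSD condition (P3). -/
def P3cond (x1 x2 X11 X12 X22 y1 y2 Y12 a1 a2 : ℝ) : Prop :=
  (!![Y12, x1 - a1, x2 - a2;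
      x1 - a1, x1 - a1, X12;
      x2 - a2, X12, x2 - a2] : Matrix (Fin 3) (Fin 3) ℝ).PosSemidef

/-- PSD condition (P4a). -/
def P4acond (x1 x2 X11 X12 X22 y1 y2 Y12 a1 a2 : ℝ) : Prop :=
  (!![y1 - Y12, 0, a1, 0;
      0, Y12, x1 - a1, x2 - a2;
      a1, x1 - a1, X11, X12;
      0, x2 - a2, X12, x2 - a2] : Matrix (Fin 4) (Fin 4) ℝ).PosSemidef

/-- PSD condition (P4b). -/
def P4bcond (x1 x2 X11 X12 X22 y1 y2 Y12 a1 a2 : ℝ) : Prop :=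
  (!![y2 - Y12, 0, 0, a2;
      0, Y12, x1 - a1, x2 - a2;
      0, x1 - a1, x1 - a1, X12;
      a2, x2 - a2, X12, X22] : Matrix (Fin 4) (Fin 4) ℝ).PosSemidef

/-- PSD condition (P5). -/
def P5cond (x1 x2 X11 X12 X22 y1 y2 Y12 a1 a2 : ℝ) : Prop :=
  (!![y1 - Y12, 0, 0, a1, 0;
      0, y2 - Y12, 0, 0, a2;
      0, 0, Y12, x1 - a1, x2 - a2;
      a1, 0, x1 - a1, X11, X12;
      0, a2, x2 - a2, X12, X22] : Matrix (Fin 5) (Fin 5) ℝ).PosSemidef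

/-!
Every point of `𝓗` is the vector of moments of a measure on the four boxes `0 ≤ x ≤ y`, and `α`
collects the part of `∫ x₁` at `y = (1, 0)` and the part of `∫ x₂` at `y = (0, 1)`. The conditions
are convex and hold at the generators of `𝓗`, hence on `𝓗`.

Conversely, given `α`, the mass splits as `Y₁₂`, `y₁ - Y₁₂`, `y₂ - Y₁₂` and `1 - y₁ - y₂ + Y₁₂` over
the four values of `y`. At `y = (1, 0)` the second moment `X₁₁` must release at least
`α₁² / (y₁ - Y₁₂)`, and enough for the rest to be at most `x₁ - α₁`; the rest left for `y = (1, 1)`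
is therefore `min (x₁ - α₁) (X₁₁ - α₁² / (y₁ - Y₁₂))`. Doing the same for `X₂₂` leaves four
combinations, and (P3), (P4a), (P4b), (P5) say, after Schur complements, that the moment matrix at
`y = (1, 1)` is positive semidefinite in each of them.

It remains that on the unit square positive semidefiniteness and the products of the bound
constraints characterise moment matrices. With the other entries fixed, the admissible cross
moments form an interval, so it suffices to realise some larger and some smaller cross moment.
Raise it until the covariance matrix becomes singular or until it equals a mean: there two Schur
pivots write the matrix as a sum of `v vᵀ` with `v` in the cone over the square. The reflection
`x₂ ↦ 1 - x₂` turns lowering into raising.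
-/

section SchurComplement

variable {n : Type*}

/-- The Schur complement of the diagonal entry `M i i` of a symmetric matrix, kept at full size:
its `i`-th row and column vanish. If `M i i = 0`, the convention `0⁻¹ = 0` makes it `M` itself,
which is right for positive semidefinite `M`, whose `i`-th row and column are then zero. -/
noncomputable def schurComplement (M : Matrix n n ℝ) (i : n) : Matrix n n ℝ :=
  M - (M i i)⁻¹ • vecMulVec (M i) (M i)

lemma schurComplement_apply (M : Matrix n n ℝ) (i j k : n) :
    schurComplement M i j k = M j k - (M i i)⁻¹ * (M i j * M i k) := rfl

lemma sq_apply_le_of_posSemidef {M : Matrix n n ℝ} (hM : M.PosSemidef) (i j : n) :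
    M i j ^ 2 ≤ M i i * M j j := by
  have hdet := (hM.submatrix ![i, j]).det_nonneg
  have hsymm : M j i = M i j := by simpa using hM.isHermitian.apply i j
  simp only [det_fin_two, submatrix_apply, cons_val_zero, cons_val_one, hsymm] at hdet
  linarith

lemma apply_eq_zero_of_posSemidef {M : Matrix n n ℝ} (hM : M.PosSemidef) {i : n}
    (hi : M i i = 0) (j : n) : M i j = 0 := by
  have := sq_apply_le_of_posSemidef hM i j
  rw [hi, zero_mul] at this
  exact pow_eq_zero_iff two_ne_zero |>.1 (this.antisymm (sq_nonneg _))

lemma schurComplement_self_apply {M : Matrix n n ℝ} (hM : M.PosSemidef) (i j : n) :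
    schurComplement M i i j = 0 := by
  rw [schurComplement_apply]
  rcases eq_or_ne (M i i) 0 with hi | hi
  · simp [apply_eq_zero_of_posSemidef hM hi]
  · field_simp
    ring

lemma posSemidef_schurComplement [Finite n] {M : Matrix n n ℝ} (hM : M.PosSemidef) (i : n) :
    (schurComplement M i).PosSemidef := by
  classical
  cases nonempty_fintype n
  set T : Matrix n n ℝ := 1 - (M i i)⁻¹ • vecMulVec (M i) (Pi.single i 1) with hT
  have hleft : T * M = schurComplement M i := by
    rw [hT, sub_mul, one_mul, Matrix.smul_mul, vecMulVec_mul, single_one_vecMul]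
    rfl
  have hcol : schurComplement M i *ᵥ Pi.single i 1 = 0 := by
    ext j
    have hsymm : M j i = M i j := by simpa using hM.isHermitian.apply i j
    rw [mulVec_single_one, col_apply, schurComplement_apply, hsymm, mul_comm (M i j),
      ← schurComplement_apply, schurComplement_self_apply hM, Pi.zero_apply]
  have hright : schurComplement M i * Tᵀ = schurComplement M i := by
    rw [hT, transpose_sub, transpose_one, transpose_smul, transpose_vecMulVec, mul_sub, mul_one,
      Matrix.mul_smul, mul_vecMulVec, hcol, zero_vecMulVec, smul_zero, sub_zero]
  have := hM.mul_mul_conjTranspose_same T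
  rwa [conjTranspose_eq_transpose_of_trivial, hleft, hright] at this

end SchurComplement

section SetCompletelyPositive

variable {n : Type*}

/-- The set-completely positive cone over `C`: conic combinations of the rank-one matrices `v vᵀ`
with `v ∈ C`. Taking for `C` the homogenisation of a set `S ⊆ ℝᵈ`, its elements are the
(unnormalised) second-order moment matrices of measures on `S`. -/
def setCompletelyPositive (C : Set (n → ℝ)) : PointedCone ℝ (Matrix n n ℝ) :=
  PointedCone.hull ℝ ((fun v ↦ vecMulVec v v) '' C)

lemma vecMulVec_self_mem_setCompletelyPositive {C : Set (n → ℝ)} {v : n → ℝ} (hv : v ∈ C) :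
    vecMulVec v v ∈ setCompletelyPositive C :=
  PointedCone.subset_hull ⟨v, hv, rfl⟩

lemma mul_mul_transpose_mem_setCompletelyPositive [Fintype n] {C D : Set (n → ℝ)} {T : Matrix n n ℝ}
    (hT : Set.MapsTo (T *ᵥ ·) C D) {M : Matrix n n ℝ} (hM : M ∈ setCompletelyPositive C) :
    T * M * Tᵀ ∈ setCompletelyPositive D := by
  induction hM using Submodule.span_induction with
  | mem M hM =>
    obtain ⟨v, hv, rfl⟩ := hM
    simpa only [mul_vecMulVec, vecMulVec_mul, vecMul_transpose] using
      vecMulVec_self_mem_setCompletelyPositive (hT hv)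
  | zero => simp
  | add M N _ _ hM hN => simpa only [mul_add, add_mul] using add_mem hM hN
  | smul r M _ hM => simpa using Submodule.smul_mem _ r hM

lemma mem_setCompletelyPositive_of_schurComplement {C : Set (n → ℝ)} {M : Matrix n n ℝ} {i : n}
    (hi : 0 ≤ M i i) (hrow : M i ∈ C)
    (hcompl : schurComplement M i ∈ setCompletelyPositive C) : M ∈ setCompletelyPositive C := by
  rw [← sub_add_cancel M ((M i i)⁻¹ • vecMulVec (M i) (M i))]
  exact add_mem hcompl <|
    PointedCone.smul_mem _ (inv_nonneg.2 hi) (vecMulVec_self_mem_setCompletelyPositive hrow)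

end SetCompletelyPositive

section MomentMatrix

/-- The second-order moment matrix `∫ (1, x₁, x₂)ᵀ (1, x₁, x₂)` in terms of the total mass `w`, the
first moments `a, b`, the second moments `A, B` and the cross moment `c`. -/
def momentMatrix (w a b A c B : ℝ) : Matrix (Fin 3) (Fin 3) ℝ :=
  !![w, a, b; a, A, c; b, c, B]

/-- The homogenisation of the box `0 ≤ x ≤ y` in the plane; index `0` is the homogenising
coordinate. -/
def boxCone (y : Fin 2 → ℝ) : Set (Fin 3 → ℝ) :=
  {v | 0 ≤ v 0 ∧ ∀ i : Fin 2, 0 ≤ v i.succ ∧ v i.succ ≤ v 0 * y i}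

/-- The transposition of the coordinates `x₁, x₂`, in homogeneous coordinates. -/
def swapMatrix : Matrix (Fin 3) (Fin 3) ℝ := !![1, 0, 0; 0, 0, 1; 0, 1, 0]

/-- The reflection `x₂ ↦ 1 - x₂`, in homogeneous coordinates. -/
def reflectMatrix : Matrix (Fin 3) (Fin 3) ℝ := !![1, 0, 0; 0, 1, 0; 1, 0, -1]

variable {w a b A c B : ℝ} {y : Fin 2 → ℝ}

lemma swapMatrix_mul_momentMatrix_mul :
    swapMatrix * momentMatrix w a b A c B * swapMatrixᵀ = momentMatrix w b a B c A := by
  ext i j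
  fin_cases i <;> fin_cases j <;>
    simp [swapMatrix, momentMatrix, mul_apply, Fin.sum_univ_three]

lemma reflectMatrix_mul_momentMatrix_mul :
    reflectMatrix * momentMatrix w a b A c B * reflectMatrixᵀ =
      momentMatrix w a (w - b) A (a - c) (w - 2 * b + B) := by
  ext i j
  fin_cases i <;> fin_cases j <;>
    simp [reflectMatrix, momentMatrix, mul_apply, Fin.sum_univ_three] <;> ring

lemma momentMatrix_swap_mem (h : momentMatrix w a b A c B ∈ setCompletelyPositive (boxCone y)) :
    momentMatrix w b a B c A ∈ setCompletelyPositive (boxCone ![y 1, y 0]) := by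
  rw [← swapMatrix_mul_momentMatrix_mul]
  refine mul_mul_transpose_mem_setCompletelyPositive (fun v hv ↦ ?_) h
  have hmul : swapMatrix *ᵥ v = ![v 0, v 2, v 1] := by
    ext i
    fin_cases i <;> simp [swapMatrix, mulVec, dotProduct, Fin.sum_univ_three]
  simpa [hmul, boxCone, Fin.forall_fin_two, and_comm] using hv

lemma momentMatrix_reflect_mem
    (h : momentMatrix w a b A c B ∈ setCompletelyPositive (boxCone ![1, 1])) :
    momentMatrix w a (w - b) A (a - c) (w - 2 * b + B) ∈
      setCompletelyPositive (boxCone ![1, 1]) := by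
  rw [← reflectMatrix_mul_momentMatrix_mul]
  refine mul_mul_transpose_mem_setCompletelyPositive (fun v hv ↦ ?_) h
  have hmul : reflectMatrix *ᵥ v = ![v 0, v 1, v 0 - v 2] := by
    ext i
    fin_cases i <;> simp [reflectMatrix, mulVec, dotProduct, Fin.sum_univ_three, sub_eq_add_neg]
  simpa [hmul, boxCone, Fin.forall_fin_two, and_comm] using hv

lemma momentMatrix_mem_of_mass_only {C : Set (Fin 3 → ℝ)} (hC : ![1, 0, 0] ∈ C) (hw : 0 ≤ w) :
    momentMatrix w 0 0 0 0 0 ∈ setCompletelyPositive C := by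
  have heq : momentMatrix w 0 0 0 0 0 = w • vecMulVec ![1, 0, 0] ![1, 0, 0] := by
    ext i j
    fin_cases i <;> fin_cases j <;> simp [momentMatrix]
  rw [heq]
  exact PointedCone.smul_mem _ hw (vecMulVec_self_mem_setCompletelyPositive hC)

lemma convex_setOf_momentMatrix_mem {S : Set (Matrix (Fin 3) (Fin 3) ℝ)} (hS : Convex ℝ S) :
    Convex ℝ {c | momentMatrix w a b A c B ∈ S} := by
  intro c hc d hd s t hs ht hst
  have heq : momentMatrix w a b A (s • c + t • d) B =
      s • momentMatrix w a b A c B + t • momentMatrix w a b A d B := by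
    ext i j
    fin_cases i <;> fin_cases j <;>
      simp [momentMatrix, ← add_mul, hst]
  rw [Set.mem_ofPred_eq, heq]
  exact hS hc hd hs ht hst

end MomentMatrix

lemma convex_setOf_posSemidef {n : Type*} : Convex ℝ {M : Matrix n n ℝ | M.PosSemidef} :=
  fun _ hM _ hN _ _ hs ht _ ↦ (hM.smul hs).add (hN.smul ht)

section Box

variable {w a b A c B : ℝ}

/-- The conditions of the Shor relaxation strengthened by the products of the bound constraints,
for the moment matrix of a measure of mass `w` on the unit square. -/
structure BoxRelaxation (w a b A c B : ℝ) : Prop where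
  posSemidef : (momentMatrix w a b A c B).PosSemidef
  fst_le : A ≤ a
  snd_le : B ≤ b
  cross_nonneg : 0 ≤ c
  cross_le_fst : c ≤ a
  cross_le_snd : c ≤ b
  le_cross : a + b - w ≤ c

lemma BoxRelaxation.swap (h : BoxRelaxation w a b A c B) : BoxRelaxation w b a B c A where
  posSemidef := by
    simpa [swapMatrix_mul_momentMatrix_mul] using
      h.posSemidef.mul_mul_conjTranspose_same swapMatrix
  fst_le := h.snd_le
  snd_le := h.fst_le
  cross_nonneg := h.cross_nonneg
  cross_le_fst := h.cross_le_snd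
  cross_le_snd := h.cross_le_fst
  le_cross := by linarith [h.le_cross]

lemma BoxRelaxation.reflect (h : BoxRelaxation w a b A c B) :
    BoxRelaxation w a (w - b) A (a - c) (w - 2 * b + B) where
  posSemidef := by
    simpa [reflectMatrix_mul_momentMatrix_mul] using
      h.posSemidef.mul_mul_conjTranspose_same reflectMatrix
  fst_le := h.fst_le
  snd_le := by linarith [h.snd_le]
  cross_nonneg := by linarith [h.cross_le_fst]
  cross_le_fst := by linarith [h.cross_nonneg]
  cross_le_snd := by linarith [h.le_cross]
  le_cross := by linarith [h.cross_le_snd]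

lemma BoxRelaxation.raise_cross {d e : ℝ} (h : BoxRelaxation w a b A c B)
    (hd : (momentMatrix w a b A d B).PosSemidef) (hce : c ≤ e) (hed : e ≤ d) (hea : e ≤ a)
    (heb : e ≤ b) : BoxRelaxation w a b A e B where
  posSemidef :=
    (convex_setOf_momentMatrix_mem convex_setOf_posSemidef).ordConnected.out
      h.posSemidef hd ⟨hce, hed⟩
  fst_le := h.fst_le
  snd_le := h.snd_le
  cross_nonneg := h.cross_nonneg.trans hce
  cross_le_fst := hea
  cross_le_snd := heb
  le_cross := h.le_cross.trans hce

lemma mem_setCompletelyPositive_of_two_pivots {C : Set (Fin 3 → ℝ)} (hC : ![1, 0, 0] ∈ C)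
    {M : Matrix (Fin 3) (Fin 3) ℝ} (hM : M.PosSemidef) (h₁ : M 1 ∈ C)
    (h₂ : schurComplement M 1 2 ∈ C) : M ∈ setCompletelyPositive C := by
  have hM' := posSemidef_schurComplement hM 1
  refine mem_setCompletelyPositive_of_schurComplement hM.diag_nonneg h₁ ?_
  refine mem_setCompletelyPositive_of_schurComplement hM'.diag_nonneg h₂ ?_
  set N := schurComplement (schurComplement M 1) 2 with hN
  have hpsd : N.PosSemidef := posSemidef_schurComplement hM' 2
  have h₂₁ : schurComplement M 1 2 1 = 0 := by
    rw [← schurComplement_self_apply hM 1 2]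
    simpa using hM'.isHermitian.apply 1 2
  have hrow₁ : ∀ j, N 1 j = 0 := fun j ↦ by
    rw [hN, schurComplement_apply, h₂₁, schurComplement_self_apply hM]
    simp
  have hrow₂ : ∀ j, N 2 j = 0 := schurComplement_self_apply hM' 2
  have hsymm : ∀ i j, N i j = N j i := fun i j ↦ by simpa using hpsd.isHermitian.apply j i
  have heq : N = momentMatrix (N 0 0) 0 0 0 0 0 := by
    ext i j
    fin_cases i <;> fin_cases j <;> simp [momentMatrix, hrow₁, hrow₂, hsymm 0]
  rw [heq]
  exact momentMatrix_mem_of_mass_only hC hpsd.diag_nonneg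

lemma BoxRelaxation.mem_of_schurComplement_le (h : BoxRelaxation w a b A c B)
    (hle : B - A⁻¹ * (c * c) ≤ b - A⁻¹ * (c * a)) :
    momentMatrix w a b A c B ∈ setCompletelyPositive (boxCone ![1, 1]) := by
  have hM := posSemidef_schurComplement h.posSemidef 1
  have hA : 0 ≤ A := h.posSemidef.diag_nonneg (i := 1)
  have hB : 0 ≤ B - A⁻¹ * (c * c) := hM.diag_nonneg (i := 2)
  refine mem_setCompletelyPositive_of_two_pivots (by simp [boxCone, Fin.forall_fin_two])
    h.posSemidef ?_ ?_
  · simp [boxCone, Fin.forall_fin_two, momentMatrix, h.fst_le, h.cross_le_fst, h.cross_nonneg, hA,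
      hA.trans h.fst_le]
  · have hzero : schurComplement (momentMatrix w a b A c B) 1 2 1 = 0 := by
      rw [← schurComplement_self_apply h.posSemidef 1 2]
      simpa using hM.isHermitian.apply 1 2
    have hv₀ : schurComplement (momentMatrix w a b A c B) 1 2 0 = b - A⁻¹ * (c * a) := rfl
    have hv₂ : schurComplement (momentMatrix w a b A c B) 1 2 2 = B - A⁻¹ * (c * c) := rfl
    simp only [boxCone, Set.mem_ofPred_eq, Fin.forall_fin_two, Fin.succ_zero_eq_one,
      Fin.succ_one_eq_two, hzero, hv₀, hv₂, cons_val_zero, cons_val_one, mul_one]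
    exact ⟨hB.trans hle, ⟨le_rfl, hB.trans hle⟩, hB, hle⟩

lemma BoxRelaxation.mem_of_cross_eq_zero (h : BoxRelaxation w a b A 0 B) :
    momentMatrix w a b A 0 B ∈ setCompletelyPositive (boxCone ![1, 1]) :=
  h.mem_of_schurComplement_le (by simpa using h.snd_le)

lemma BoxRelaxation.mem_of_cross_eq_fst (h : BoxRelaxation w a b A a B) :
    momentMatrix w a b A a B ∈ setCompletelyPositive (boxCone ![1, 1]) := by
  have hzero := h.reflect
  rw [sub_self] at hzero
  convert momentMatrix_reflect_mem hzero.mem_of_cross_eq_zero using 2 <;> ring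

lemma BoxRelaxation.snd_le_mass (h : BoxRelaxation w a b A c B) : b ≤ w := by
  linarith [h.le_cross, h.cross_le_fst]

lemma BoxRelaxation.mem_of_le_of_rank_two {s r : ℝ} (h : BoxRelaxation w a b A c B) (hw : 0 < w)
    (hA : A = a ^ 2 / w + s ^ 2) (hc : c = a * b / w + s * r) (hB : B = b ^ 2 / w + r ^ 2)
    (hs : 0 ≤ s) (hr : 0 ≤ r) (hle : a * r ≤ b * s) :
    momentMatrix w a b A c B ∈ setCompletelyPositive (boxCone ![1, 1]) := by
  refine h.mem_of_schurComplement_le ?_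
  have ha : 0 ≤ a := h.cross_nonneg.trans h.cross_le_fst
  have hbs : b * s - a * r ≤ w * s :=
    (sub_le_self _ (mul_nonneg ha hr)).trans (mul_le_mul_of_nonneg_right h.snd_le_mass hs)
  have hgap : A * b - c * a - (A * B - c * c) =
      (b * s - a * r) * (w * s - (b * s - a * r)) / w := by
    subst hA hc hB
    field_simp
    ring
  have hgap_nonneg : 0 ≤ A * b - c * a - (A * B - c * c) :=
    hgap ▸ div_nonneg (mul_nonneg (sub_nonneg.2 hle) (sub_nonneg.2 hbs)) hw.le
  have hA_nonneg : 0 ≤ A := h.posSemidef.diag_nonneg (i := 1)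
  obtain hA₀ | hA₀ := hA_nonneg.eq_or_lt
  · simpa [← hA₀] using h.snd_le
  · refine le_of_mul_le_mul_left ?_ hA₀
    rw [mul_sub, mul_sub, mul_inv_cancel_left₀ hA₀.ne', mul_inv_cancel_left₀ hA₀.ne']
    exact sub_nonneg.1 hgap_nonneg

lemma BoxRelaxation.cross_sub_sq_le (h : BoxRelaxation w a b A c B) :
    (c - a * b / w) ^ 2 ≤ (A - a ^ 2 / w) * (B - b ^ 2 / w) := by
  convert sq_apply_le_of_posSemidef (posSemidef_schurComplement h.posSemidef 0) 1 2 using 2 <;>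
    simp [schurComplement_apply, momentMatrix] <;> ring

lemma BoxRelaxation.fst_sq_le (h : BoxRelaxation w a b A c B) : a ^ 2 ≤ w * A :=
  sq_apply_le_of_posSemidef h.posSemidef 0 1

lemma posSemidef_momentMatrix_of_rank_two {s r : ℝ} (hw : 0 < w) (hA : A = a ^ 2 / w + s ^ 2)
    (hc : c = a * b / w + s * r) (hB : B = b ^ 2 / w + r ^ 2) :
    (momentMatrix w a b A c B).PosSemidef := by
  have heq : momentMatrix w a b A c B =
      w⁻¹ • vecMulVec ![w, a, b] (star ![w, a, b]) + vecMulVec ![0, s, r] (star ![0, s, r]) := by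
    subst hA hc hB
    ext i j
    fin_cases i <;> fin_cases j <;> simp [momentMatrix] <;> field_simp
  rw [heq]
  exact ((posSemidef_vecMulVec_self_star _).smul (inv_nonneg.2 hw.le)).add
    (posSemidef_vecMulVec_self_star _)

lemma BoxRelaxation.exists_le_cross_mem_of_le (h : BoxRelaxation w a b A c B) (hw : 0 < w)
    (hab : a ≤ b) :
    ∃ d, c ≤ d ∧ momentMatrix w a b A d B ∈ setCompletelyPositive (boxCone ![1, 1]) := by
  have hvar₁ : 0 ≤ A - a ^ 2 / w := sub_nonneg.2 ((div_le_iff₀' hw).2 h.fst_sq_le)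
  have hvar₂ : 0 ≤ B - b ^ 2 / w := sub_nonneg.2 ((div_le_iff₀' hw).2 h.swap.fst_sq_le)
  set s := √(A - a ^ 2 / w)
  set r := √(B - b ^ 2 / w)
  have hs : 0 ≤ s := Real.sqrt_nonneg _
  have hr : 0 ≤ r := Real.sqrt_nonneg _
  have hA : A = a ^ 2 / w + s ^ 2 := by rw [Real.sq_sqrt hvar₁]; ring
  have hB : B = b ^ 2 / w + r ^ 2 := by rw [Real.sq_sqrt hvar₂]; ring
  set d := a * b / w + s * r with hd
  have hcd : c ≤ d := by
    rw [hd, ← sub_le_iff_le_add', ← Real.sqrt_mul hvar₁]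
    exact Real.le_sqrt_of_sq_le h.cross_sub_sq_le
  have hpsd := posSemidef_momentMatrix_of_rank_two hw hA hd hB
  obtain hda | had := le_total d a
  · have hbox := h.raise_cross hpsd hcd le_rfl hda (hda.trans hab)
    refine ⟨d, hcd, ?_⟩
    obtain hle | hle := le_total (a * r) (b * s)
    · exact hbox.mem_of_le_of_rank_two hw hA hd hB hs hr hle
    · exact momentMatrix_swap_mem (y := ![1, 1]) <|
        hbox.swap.mem_of_le_of_rank_two hw hB (by rw [hd]; ring) hA hr hs hle
  · have hbox := h.raise_cross hpsd h.cross_le_fst had le_rfl hab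
    exact ⟨a, h.cross_le_fst, hbox.mem_of_cross_eq_fst⟩

lemma BoxRelaxation.exists_le_cross_mem (h : BoxRelaxation w a b A c B) :
    ∃ d, c ≤ d ∧ momentMatrix w a b A d B ∈ setCompletelyPositive (boxCone ![1, 1]) := by
  have hw_nonneg : 0 ≤ w := h.posSemidef.diag_nonneg (i := 0)
  obtain hw | hw := hw_nonneg.eq_or_lt
  · have ha : a = 0 := apply_eq_zero_of_posSemidef h.posSemidef (i := 0) hw.symm 1
    obtain rfl : c = 0 := (ha ▸ h.cross_le_fst).antisymm h.cross_nonneg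
    exact ⟨0, le_rfl, h.mem_of_cross_eq_zero⟩
  obtain hab | hba := le_total a b
  · exact h.exists_le_cross_mem_of_le hw hab
  · obtain ⟨d, hcd, hd⟩ := h.swap.exists_le_cross_mem_of_le hw hba
    exact ⟨d, hcd, momentMatrix_swap_mem (y := ![1, 1]) hd⟩

theorem BoxRelaxation.momentMatrix_mem (h : BoxRelaxation w a b A c B) :
    momentMatrix w a b A c B ∈ setCompletelyPositive (boxCone ![1, 1]) := by
  obtain ⟨d, hcd, hd⟩ := h.exists_le_cross_mem
  obtain ⟨e, hce, he⟩ := h.reflect.exists_le_cross_mem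
  have hlow : momentMatrix w a b A (a - e) B ∈ setCompletelyPositive (boxCone ![1, 1]) := by
    convert momentMatrix_reflect_mem he using 2 <;> ring
  exact (convex_setOf_momentMatrix_mem (setCompletelyPositive _).convex).ordConnected.out
    hlow hd ⟨sub_le_comm.1 hce, hcd⟩

end Box

section Homogenization

open scoped Pointwise

variable {E : Type*} [AddCommGroup E] [Module ℝ E] {S : Set E}

/-- The cone over a convex set `S`, placed at height `1`. -/
def homogenization (hS : Convex ℝ S) (hne : S.Nonempty) : PointedCone ℝ (ℝ × E) where
  carrier := {z | 0 ≤ z.1 ∧ z.2 ∈ z.1 • S}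
  zero_mem' := ⟨le_rfl, by simp [Set.zero_smul_set hne]⟩
  add_mem' := fun ⟨hw, hp⟩ ⟨hv, hq⟩ ↦
    ⟨add_nonneg hw hv, (hS.add_smul hw hv).symm ▸ Set.add_mem_add hp hq⟩
  smul_mem' r z hz := by
    refine ⟨mul_nonneg r.2 hz.1, ?_⟩
    change r.1 • z.2 ∈ (r.1 * z.1) • S
    rw [mul_smul]
    exact Set.smul_mem_smul_set hz.2

lemma mem_of_one_mem_homogenization {hS : Convex ℝ S} {hne : S.Nonempty} {p : E}
    (hp : ((1 : ℝ), p) ∈ homogenization hS hne) : p ∈ S := by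
  simpa using hp.2

end Homogenization

section Slices

lemma Hset_nonempty : Hset.Nonempty :=
  ⟨_, subset_convexHull ℝ _ ⟨0, 0, by simp, by simp, by simp, rfl⟩⟩

/-- The cone over `𝓗`. -/
def coneHset : PointedCone ℝ (ℝ × LiftedSpace) :=
  homogenization (convex_convexHull ℝ _ : Convex ℝ Hset) Hset_nonempty

/-- The integral of `(1, (x, x xᵀ, y, y₁ y₂))` over a measure of `x` at a fixed `y`, in terms of the
moment matrix of that measure. -/
def sliceMap (y : Fin 2 → ℝ) : Matrix (Fin 3) (Fin 3) ℝ →ₗ[ℝ] ℝ × LiftedSpace where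
  toFun M :=
    (M 0 0, fun i ↦ M 0 i.succ, M.submatrix Fin.succ Fin.succ, M 0 0 • y, M 0 0 * (y 0 * y 1))
  map_add' M N := by
    simp only [Matrix.add_apply, add_smul, add_mul]
    rfl
  map_smul' r M := by
    simp only [Matrix.smul_apply, smul_assoc, smul_mul_assoc]
    rfl

variable {y : Fin 2 → ℝ}

lemma sliceMap_vecMulVec_mem_coneHset (hy : ∀ i, y i = 0 ∨ y i = 1) {v : Fin 3 → ℝ}
    (hv : v ∈ boxCone y) : sliceMap y (vecMulVec v v) ∈ coneHset := by
  obtain ⟨hv₀, hv⟩ := hv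
  -- If `v 0 = 0`, then `v = 0`, and division by zero gives the admissible point `x = 0`.
  set x : Fin 2 → ℝ := fun i ↦ v i.succ / v 0
  have hvx : ∀ i : Fin 2, v i.succ = v 0 * x i := fun i ↦ by
    refine (mul_div_cancel_of_imp' fun h₀ ↦ ?_).symm
    exact ((hv i).2.trans_eq (by rw [h₀, zero_mul])).antisymm (hv i).1
  have hxy : ∀ i, x i ≤ y i := fun i ↦
    div_le_of_le_mul₀ hv₀ (by rcases hy i with h | h <;> simp [h])
      ((hv i).2.trans_eq (mul_comm _ _))
  refine ⟨mul_self_nonneg _, (x, vecMulVec x x, y, y 0 * y 1), subset_convexHull ℝ _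
    ⟨x, y, fun i ↦ div_nonneg (hv i).1 hv₀, hxy, hy, rfl⟩, ?_⟩
  refine Prod.ext (funext fun i ↦ ?_) (Prod.ext (Matrix.ext fun i j ↦ ?_) (Prod.ext rfl rfl))
  · change v 0 * v 0 * x i = v 0 * v i.succ
    rw [hvx, mul_assoc]
  · change v 0 * v 0 * (x i * x j) = v i.succ * v j.succ
    rw [hvx, hvx]
    ring

lemma sliceMap_mem_coneHset (hy : ∀ i, y i = 0 ∨ y i = 1) {M : Matrix (Fin 3) (Fin 3) ℝ}
    (hM : M ∈ setCompletelyPositive (boxCone y)) : sliceMap y M ∈ coneHset := by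
  induction hM using Submodule.span_induction with
  | mem M hM =>
    obtain ⟨v, hv, rfl⟩ := hM
    exact sliceMap_vecMulVec_mem_coneHset hy hv
  | zero => exact (sliceMap y).map_zero ▸ zero_mem _
  | add M N _ _ hM hN => exact (sliceMap y).map_add M N ▸ add_mem hM hN
  | smul r M _ hM => exact (sliceMap y).map_smul r.1 M ▸ Submodule.smul_mem _ r hM

lemma momentMatrix_mem_of_snd_eq_zero {w a A : ℝ} (hw : 0 ≤ w) (hA : 0 ≤ A) (hsq : a ^ 2 ≤ w * A)
    (hAa : A ≤ a) : momentMatrix w a 0 A 0 0 ∈ setCompletelyPositive (boxCone ![1, 0]) := by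
  have ha : A = 0 → a = 0 := fun h ↦
    pow_eq_zero_iff two_ne_zero |>.1 ((hsq.trans_eq (by rw [h, mul_zero])).antisymm (sq_nonneg a))
  have hself : A⁻¹ * (A * A) = A := by rw [inv_mul_eq_div, mul_self_div_self]
  have hcross : A⁻¹ * (A * a) = a := by rw [inv_mul_eq_div, mul_div_cancel_left_of_imp ha]
  refine mem_setCompletelyPositive_of_schurComplement (i := 1) hA ?_ ?_
  · simp [boxCone, Fin.forall_fin_two, momentMatrix, hA, hAa, hA.trans hAa]
  have heq : schurComplement (momentMatrix w a 0 A 0 0) 1 =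
      momentMatrix (w - A⁻¹ * a ^ 2) 0 0 0 0 0 := by
    ext i j
    fin_cases i <;> fin_cases j <;>
      simp [schurComplement_apply, momentMatrix, hself, hcross, mul_comm a A, pow_two]
  rw [heq]
  refine momentMatrix_mem_of_mass_only (by simp [boxCone, Fin.forall_fin_two]) (sub_nonneg.2 ?_)
  exact inv_mul_le_of_le_mul₀ hA hw (hsq.trans_eq (mul_comm w A))

/-- When the part of a measure at `y = (1, 0)` has mass `l` and mean `a`, the largest second moment
that can be left for `y = (1, 1)`, given total first and second moments `x` and `X`. -/
noncomputable def residualMoment (l a x X : ℝ) : ℝ := min (x - a) (X - l⁻¹ * (a * a))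

lemma momentMatrix_sub_residualMoment_mem {l a x X : ℝ} (ha : 0 ≤ a) (hal : a ≤ l) (hX : X ≤ x) :
    momentMatrix l a 0 (X - residualMoment l a x X) 0 0 ∈
      setCompletelyPositive (boxCone ![1, 0]) := by
  have hl : 0 ≤ l := ha.trans hal
  have heq : X - residualMoment l a x X = max (X - (x - a)) (l⁻¹ * (a * a)) := by
    rw [residualMoment, ← max_sub_sub_left, sub_sub_cancel]
  have hpos : 0 ≤ l⁻¹ * (a * a) := by positivity
  have hsq : a ^ 2 = l * (l⁻¹ * (a * a)) := by
    obtain rfl | hl₀ := eq_or_ne l 0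
    · simp [ha.antisymm' hal]
    · rw [mul_inv_cancel_left₀ hl₀, pow_two]
  rw [heq]
  refine momentMatrix_mem_of_snd_eq_zero hl (le_max_of_le_right hpos) ?_ (max_le ?_ ?_)
  · exact hsq.trans_le (mul_le_mul_of_nonneg_left (le_max_right _ _) hl)
  · linarith
  · exact inv_mul_le_of_le_mul₀ hl ha (mul_le_mul_of_nonneg_right hal ha)

end Slices

section Relaxation

/-- The conditions (L), (P3), (P4a), (P4b), (P5) for the point `p = (x, X, y, Y₁₂)` and `α = a`. -/
structure IsFeasible (p : LiftedSpace) (a : Fin 2 → ℝ) : Prop where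
  isSymm : p.2.1.IsSymm
  linear : Lcond (p.1 0) (p.1 1) (p.2.1 0 0) (p.2.1 0 1) (p.2.1 1 1)
    (p.2.2.1 0) (p.2.2.1 1) p.2.2.2 (a 0) (a 1)
  three : P3cond (p.1 0) (p.1 1) (p.2.1 0 0) (p.2.1 0 1) (p.2.1 1 1)
    (p.2.2.1 0) (p.2.2.1 1) p.2.2.2 (a 0) (a 1)
  fourA : P4acond (p.1 0) (p.1 1) (p.2.1 0 0) (p.2.1 0 1) (p.2.1 1 1)
    (p.2.2.1 0) (p.2.2.1 1) p.2.2.2 (a 0) (a 1)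
  fourB : P4bcond (p.1 0) (p.1 1) (p.2.1 0 0) (p.2.1 0 1) (p.2.1 1 1)
    (p.2.2.1 0) (p.2.2.1 1) p.2.2.2 (a 0) (a 1)
  five : P5cond (p.1 0) (p.1 1) (p.2.1 0 0) (p.2.1 0 1) (p.2.1 1 1)
    (p.2.2.1 0) (p.2.2.1 1) p.2.2.2 (a 0) (a 1)

section Conditions

variable {x₁ x₂ X₁₁ X₁₂ X₂₂ y₁ y₂ Y a₁ a₂ : ℝ}

lemma P4acond.posSemidef_momentMatrix (h : P4acond x₁ x₂ X₁₁ X₁₂ X₂₂ y₁ y₂ Y a₁ a₂) :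
    (momentMatrix Y (x₁ - a₁) (x₂ - a₂) (X₁₁ - (y₁ - Y)⁻¹ * (a₁ * a₁)) X₁₂
      (x₂ - a₂)).PosSemidef := by
  convert (posSemidef_schurComplement h 0).submatrix ![1, 2, 3] using 1
  ext i j
  fin_cases i <;> fin_cases j <;> simp [momentMatrix, schurComplement_apply]

lemma P4bcond.posSemidef_momentMatrix (h : P4bcond x₁ x₂ X₁₁ X₁₂ X₂₂ y₁ y₂ Y a₁ a₂) :
    (momentMatrix Y (x₁ - a₁) (x₂ - a₂) (x₁ - a₁) X₁₂
      (X₂₂ - (y₂ - Y)⁻¹ * (a₂ * a₂))).PosSemidef := by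
  convert (posSemidef_schurComplement h 0).submatrix ![1, 2, 3] using 1
  ext i j
  fin_cases i <;> fin_cases j <;> simp [momentMatrix, schurComplement_apply]

lemma P5cond.posSemidef_momentMatrix (h : P5cond x₁ x₂ X₁₁ X₁₂ X₂₂ y₁ y₂ Y a₁ a₂) :
    (momentMatrix Y (x₁ - a₁) (x₂ - a₂) (X₁₁ - (y₁ - Y)⁻¹ * (a₁ * a₁)) X₁₂
      (X₂₂ - (y₂ - Y)⁻¹ * (a₂ * a₂))).PosSemidef := by
  convert (posSemidef_schurComplement (posSemidef_schurComplement h 0) 1).submatrix ![2, 3, 4]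
    using 1
  ext i j
  fin_cases i <;> fin_cases j <;> simp [momentMatrix, schurComplement_apply]

lemma boxRelaxation_residualMoment (hL : Lcond x₁ x₂ X₁₁ X₁₂ X₂₂ y₁ y₂ Y a₁ a₂)
    (h₃ : P3cond x₁ x₂ X₁₁ X₁₂ X₂₂ y₁ y₂ Y a₁ a₂)
    (h₄a : P4acond x₁ x₂ X₁₁ X₁₂ X₂₂ y₁ y₂ Y a₁ a₂)
    (h₄b : P4bcond x₁ x₂ X₁₁ X₁₂ X₂₂ y₁ y₂ Y a₁ a₂)
    (h₅ : P5cond x₁ x₂ X₁₁ X₁₂ X₂₂ y₁ y₂ Y a₁ a₂) :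
    BoxRelaxation Y (x₁ - a₁) (x₂ - a₂) (residualMoment (y₁ - Y) a₁ x₁ X₁₁) X₁₂
      (residualMoment (y₂ - Y) a₂ x₂ X₂₂) := by
  obtain ⟨-, -, -, -, hlow, hupp, -⟩ := hL
  refine ⟨?_, min_le_left _ _, min_le_left _ _, (le_max_left _ _).trans hlow,
    hupp.trans (min_le_left _ _), hupp.trans (min_le_right _ _), ?_⟩
  · unfold residualMoment
    rcases min_choice (x₁ - a₁) (X₁₁ - (y₁ - Y)⁻¹ * (a₁ * a₁)) with h | h <;>
      rcases min_choice (x₂ - a₂) (X₂₂ - (y₂ - Y)⁻¹ * (a₂ * a₂)) with h' | h' <;> rw [h, h']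
    exacts [h₃, h₄b.posSemidef_momentMatrix, h₄a.posSemidef_momentMatrix,
      h₅.posSemidef_momentMatrix]
  · linarith [(le_max_right _ _).trans hlow]

end Conditions

lemma one_eq_sum_sliceMap {X : Matrix (Fin 2) (Fin 2) ℝ} (hX : X.IsSymm) (x y a : Fin 2 → ℝ)
    (Y Z₁ Z₂ : ℝ) :
    ((1 : ℝ), (x, X, y, Y)) =
      sliceMap ![1, 1] (momentMatrix Y (x 0 - a 0) (x 1 - a 1) Z₁ (X 0 1) Z₂) +
      sliceMap ![1, 0] (momentMatrix (y 0 - Y) (a 0) 0 (X 0 0 - Z₁) 0 0) +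
      sliceMap ![0, 1] (momentMatrix (y 1 - Y) 0 (a 1) 0 0 (X 1 1 - Z₂)) +
      sliceMap ![0, 0] (momentMatrix (1 - y 0 - y 1 + Y) 0 0 0 0 0) := by
  have hsymm : X 1 0 = X 0 1 := hX.apply 0 1
  refine Prod.ext ?_ (Prod.ext (funext fun i ↦ ?_) (Prod.ext (Matrix.ext fun i j ↦ ?_)
    (Prod.ext (funext fun i ↦ ?_) ?_)))
  · simp [sliceMap, momentMatrix]
    ring
  · fin_cases i <;> simp [sliceMap, momentMatrix]
  · fin_cases i <;> fin_cases j <;> simp [sliceMap, momentMatrix, hsymm]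
  · fin_cases i <;> simp [sliceMap, momentMatrix]
  · simp [sliceMap, momentMatrix]

theorem IsFeasible.mem_Hset {p : LiftedSpace} {a : Fin 2 → ℝ} (h : IsFeasible p a) : p ∈ Hset := by
  obtain ⟨x, X, y, Y⟩ := p
  obtain ⟨hX, hL, h₃, h₄a, h₄b, h₅⟩ := h
  have hbox := boxRelaxation_residualMoment hL h₃ h₄a h₄b h₅
  obtain ⟨hX₁, -, hX₂, -, -, -, ha₁, ha₁', ha₂, ha₂', hY, -⟩ := hL
  have h₀ : y 0 + y 1 - 1 ≤ Y := (le_max_right _ _).trans hY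
  suffices hp : ((1 : ℝ), (x, X, y, Y)) ∈ coneHset from mem_of_one_mem_homogenization hp
  rw [one_eq_sum_sliceMap hX x y a Y (residualMoment (y 0 - Y) (a 0) (x 0) (X 0 0))
    (residualMoment (y 1 - Y) (a 1) (x 1) (X 1 1))]
  refine add_mem (add_mem (add_mem ?_ ?_) ?_) ?_ <;>
    refine sliceMap_mem_coneHset (by simp [Fin.forall_fin_two]) ?_
  · exact hbox.momentMatrix_mem
  · exact momentMatrix_sub_residualMoment_mem ha₁ ha₁' hX₁
  · exact momentMatrix_swap_mem (y := ![1, 0])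
      (momentMatrix_sub_residualMoment_mem ha₂ ha₂' hX₂)
  · exact momentMatrix_mem_of_mass_only (by simp [boxCone, Fin.forall_fin_two]) (by linarith)

section Convexity

/-- The differences of the two sides of the inequalities (L), with each `max` and `min` split. -/
def linearSlack (p : LiftedSpace) (a : Fin 2 → ℝ) : Fin 16 → ℝ :=
  ![p.1 0 - p.2.1 0 0, p.2.2.1 0 - p.1 0, p.1 1 - p.2.1 1 1, p.2.2.1 1 - p.1 1,
    p.2.1 0 1, p.2.1 0 1 - (p.1 0 - a 0 + p.1 1 - a 1 - p.2.2.2),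
    p.1 0 - a 0 - p.2.1 0 1, p.1 1 - a 1 - p.2.1 0 1,
    a 0, p.2.2.1 0 - p.2.2.2 - a 0, a 1, p.2.2.1 1 - p.2.2.2 - a 1,
    p.2.2.2, p.2.2.2 - (p.2.2.1 0 + p.2.2.1 1 - 1), p.2.2.1 0 - p.2.2.2, p.2.2.1 1 - p.2.2.2]

lemma Lcond_iff_linearSlack_nonneg {p : LiftedSpace} {a : Fin 2 → ℝ} :
    Lcond (p.1 0) (p.1 1) (p.2.1 0 0) (p.2.1 0 1) (p.2.1 1 1) (p.2.2.1 0) (p.2.2.1 1) p.2.2.2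
      (a 0) (a 1) ↔ 0 ≤ linearSlack p a := by
  simp only [Lcond, linearSlack, Pi.le_def, Fin.forall_fin_succ, and_assoc, max_le_iff, le_min_iff]
  simp

variable {p q : LiftedSpace} {a b : Fin 2 → ℝ} {s t : ℝ}

lemma linearSlack_combination (hst : s + t = 1) :
    linearSlack (s • p + t • q) (s • a + t • b) = s • linearSlack p a + t • linearSlack q b := by
  obtain rfl : t = 1 - s := by linarith
  ext i
  fin_cases i <;> simp [linearSlack] <;> ring

lemma IsFeasible.combination (hp : IsFeasible p a) (hq : IsFeasible q b) (hs : 0 ≤ s) (ht : 0 ≤ t)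
    (hst : s + t = 1) : IsFeasible (s • p + t • q) (s • a + t • b) where
  isSymm := (hp.isSymm.smul s).add (hq.isSymm.smul t)
  linear := by
    rw [Lcond_iff_linearSlack_nonneg, linearSlack_combination hst]
    exact add_nonneg (smul_nonneg hs (Lcond_iff_linearSlack_nonneg.1 hp.linear))
      (smul_nonneg ht (Lcond_iff_linearSlack_nonneg.1 hq.linear))
  three := by
    unfold P3cond
    convert (PosSemidef.smul hp.three hs).add (PosSemidef.smul hq.three ht) using 1
    ext i j
    fin_cases i <;> fin_cases j <;> simp <;> ring
  fourA := by
    unfold P4acond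
    convert (PosSemidef.smul hp.fourA hs).add (PosSemidef.smul hq.fourA ht) using 1
    ext i j
    fin_cases i <;> fin_cases j <;> simp <;> ring
  fourB := by
    unfold P4bcond
    convert (PosSemidef.smul hp.fourB hs).add (PosSemidef.smul hq.fourB ht) using 1
    ext i j
    fin_cases i <;> fin_cases j <;> simp <;> ring
  five := by
    unfold P5cond
    convert (PosSemidef.smul hp.five hs).add (PosSemidef.smul hq.five ht) using 1
    ext i j
    fin_cases i <;> fin_cases j <;> simp <;> ring

end Convexity

section ExtremePoints

lemma posSemidef_vecMulVec_self_add_diagonal {n : Type*} [Finite n] [DecidableEq n]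
    (u : n → ℝ) {d : n → ℝ} (hd : 0 ≤ d) : (vecMulVec u u + diagonal d).PosSemidef := by
  cases nonempty_fintype n
  exact (posSemidef_vecMulVec_self_star u).add (PosSemidef.diagonal hd)

/-- The pairs `(x, y)` with `0 ≤ x ≤ y` and `y` binary, from which `𝓗` is built. -/
structure IsBinaryPoint (x y : Fin 2 → ℝ) : Prop where
  nonneg : ∀ i, 0 ≤ x i
  le : ∀ i, x i ≤ y i
  binary : ∀ i, y i = 0 ∨ y i = 1

/-- The `α` of a point `(x, x xᵀ, y, y₁ y₂)`: the part of `x₁` at `y = (1, 0)` and the part of `x₂`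
at `y = (0, 1)`. -/
def singlePart (x y : Fin 2 → ℝ) : Fin 2 → ℝ := ![x 0 * (1 - y 1), x 1 * (1 - y 0)]

namespace IsBinaryPoint

variable {x y : Fin 2 → ℝ}

lemma eq_zero (h : IsBinaryPoint x y) {i : Fin 2} (hi : y i = 0) : x i = 0 :=
  ((h.le i).trans_eq hi).antisymm (h.nonneg i)

lemma le_one (h : IsBinaryPoint x y) (i : Fin 2) : x i ≤ 1 :=
  (h.le i).trans (by rcases h.binary i with hi | hi <;> simp [hi])

lemma mul_one_sub_nonneg (h : IsBinaryPoint x y) (i j : Fin 2) :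
    0 ≤ x i * y j * (1 - x i * y j) := by
  rcases h.binary j with hj | hj
  · simp [hj]
  · simpa [hj] using mul_nonneg (h.nonneg i) (sub_nonneg.2 (h.le_one i))

lemma linear (h : IsBinaryPoint x y) :
    Lcond (x 0) (x 1) (x 0 * x 0) (x 0 * x 1) (x 1 * x 1) (y 0) (y 1) (y 0 * y 1)
      (singlePart x y 0) (singlePart x y 1) := by
  have hsq : ∀ i, x i * x i ≤ x i := fun i ↦ mul_le_of_le_one_left (h.nonneg i) (h.le_one i)
  have hmul : 0 ≤ x 0 * x 1 := mul_nonneg (h.nonneg 0) (h.nonneg 1)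
  have hmul₀ : x 0 * x 1 ≤ x 0 := mul_le_of_le_one_right (h.nonneg 0) (h.le_one 1)
  have hmul₁ : x 0 * x 1 ≤ x 1 := mul_le_of_le_one_left (h.nonneg 1) (h.le_one 0)
  have hcross : x 0 + x 1 ≤ x 0 * x 1 + 1 := by
    linarith [mul_nonneg (sub_nonneg.2 (h.le_one 0)) (sub_nonneg.2 (h.le_one 1))]
  rcases h.binary 0 with hy₀ | hy₀ <;> rcases h.binary 1 with hy₁ | hy₁ <;>
    simp [Lcond, singlePart, hy₀, hy₁, h.eq_zero, hsq, h.le_one, h.nonneg, hmul, hmul₀, hmul₁,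
      hcross]

lemma three (h : IsBinaryPoint x y) :
    P3cond (x 0) (x 1) (x 0 * x 0) (x 0 * x 1) (x 1 * x 1) (y 0) (y 1) (y 0 * y 1)
      (singlePart x y 0) (singlePart x y 1) := by
  unfold P3cond
  convert posSemidef_vecMulVec_self_add_diagonal ![y 0 * y 1, x 0 * y 1, x 1 * y 0]
    (d := ![0, x 0 * y 1 * (1 - x 0 * y 1), x 1 * y 0 * (1 - x 1 * y 0)]) ?_ using 1
  · rcases h.binary 0 with h₀ | h₀ <;> rcases h.binary 1 with h₁ | h₁ <;> ext i j <;>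
      fin_cases i <;> fin_cases j <;> simp [singlePart, h₀, h₁, h.eq_zero] <;> ring
  · simp [Pi.le_def, Fin.forall_fin_succ, h.mul_one_sub_nonneg]

lemma fourA (h : IsBinaryPoint x y) :
    P4acond (x 0) (x 1) (x 0 * x 0) (x 0 * x 1) (x 1 * x 1) (y 0) (y 1) (y 0 * y 1)
      (singlePart x y 0) (singlePart x y 1) := by
  unfold P4acond
  convert posSemidef_vecMulVec_self_add_diagonal ![y 0 - y 0 * y 1, y 0 * y 1, x 0, x 1 * y 0]
    (d := ![0, 0, 0, x 1 * y 0 * (1 - x 1 * y 0)]) ?_ using 1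
  · rcases h.binary 0 with h₀ | h₀ <;> rcases h.binary 1 with h₁ | h₁ <;> ext i j <;>
      fin_cases i <;> fin_cases j <;> simp [singlePart, h₀, h₁, h.eq_zero] <;> ring
  · simp [Pi.le_def, Fin.forall_fin_succ, h.mul_one_sub_nonneg]

lemma fourB (h : IsBinaryPoint x y) :
    P4bcond (x 0) (x 1) (x 0 * x 0) (x 0 * x 1) (x 1 * x 1) (y 0) (y 1) (y 0 * y 1)
      (singlePart x y 0) (singlePart x y 1) := by
  unfold P4bcond
  convert posSemidef_vecMulVec_self_add_diagonal ![y 1 - y 0 * y 1, y 0 * y 1, x 0 * y 1, x 1]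
    (d := ![0, 0, x 0 * y 1 * (1 - x 0 * y 1), 0]) ?_ using 1
  · rcases h.binary 0 with h₀ | h₀ <;> rcases h.binary 1 with h₁ | h₁ <;> ext i j <;>
      fin_cases i <;> fin_cases j <;> simp [singlePart, h₀, h₁, h.eq_zero] <;> ring
  · simp [Pi.le_def, Fin.forall_fin_succ, h.mul_one_sub_nonneg]

lemma five (h : IsBinaryPoint x y) :
    P5cond (x 0) (x 1) (x 0 * x 0) (x 0 * x 1) (x 1 * x 1) (y 0) (y 1) (y 0 * y 1)
      (singlePart x y 0) (singlePart x y 1) := by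
  unfold P5cond
  convert posSemidef_vecMulVec_self_star
    ![y 0 - y 0 * y 1, y 1 - y 0 * y 1, y 0 * y 1, x 0, x 1] using 1
  rcases h.binary 0 with h₀ | h₀ <;> rcases h.binary 1 with h₁ | h₁ <;> ext i j <;>
    fin_cases i <;> fin_cases j <;> simp [singlePart, h₀, h₁, h.eq_zero, mul_comm]

lemma isFeasible (h : IsBinaryPoint x y) :
    IsFeasible (x, vecMulVec x x, y, y 0 * y 1) (singlePart x y) :=
  ⟨transpose_vecMulVec x x, h.linear, h.three, h.fourA, h.fourB, h.five⟩

end IsBinaryPoint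

end ExtremePoints

theorem exists_isFeasible_of_mem_Hset {p : LiftedSpace} (hp : p ∈ Hset) :
    ∃ a, IsFeasible p a := by
  refine convexHull_min (t := {p | ∃ a, IsFeasible p a}) ?_ ?_ hp
  · rintro _ ⟨x, y, hx, hxy, hy, rfl⟩
    exact ⟨_, (IsBinaryPoint.mk hx hxy hy).isFeasible⟩
  · rintro p ⟨a, hp⟩ q ⟨b, hq⟩ s t hs ht hst
    exact ⟨_, hp.combination hq hs ht hst⟩

end Relaxation

/-- 𝓗 equals the projection onto (x, X, y, Y₁₂) of the points (x, X, y, Y₁₂, α)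
satisfying (L), (P3), (P4a), (P4b), (P5). -/
theorem stmt4 :
    Hset = {p : (Fin 2 → ℝ) × Matrix (Fin 2) (Fin 2) ℝ × (Fin 2 → ℝ) × ℝ |
      p.2.1.IsSymm ∧ ∃ a : Fin 2 → ℝ,
        Lcond (p.1 0) (p.1 1) (p.2.1 0 0) (p.2.1 0 1) (p.2.1 1 1)
          (p.2.2.1 0) (p.2.2.1 1) p.2.2.2 (a 0) (a 1) ∧
        P3cond (p.1 0) (p.1 1) (p.2.1 0 0) (p.2.1 0 1) (p.2.1 1 1)
          (p.2.2.1 0) (p.2.2.1 1) p.2.2.2 (a 0) (a 1) ∧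
        P4acond (p.1 0) (p.1 1) (p.2.1 0 0) (p.2.1 0 1) (p.2.1 1 1)
          (p.2.2.1 0) (p.2.2.1 1) p.2.2.2 (a 0) (a 1) ∧
        P4bcond (p.1 0) (p.1 1) (p.2.1 0 0) (p.2.1 0 1) (p.2.1 1 1)
          (p.2.2.1 0) (p.2.2.1 1) p.2.2.2 (a 0) (a 1) ∧
        P5cond (p.1 0) (p.1 1) (p.2.1 0 0) (p.2.1 0 1) (p.2.1 1 1)
          (p.2.2.1 0) (p.2.2.1 1) p.2.2.2 (a 0) (a 1)} := by
  refine Set.ext fun p ↦ ⟨fun hp ↦ ?_, fun ⟨hX, a, hL, h₃, h₄a, h₄b, h₅⟩ ↦ ?_⟩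
  · obtain ⟨a, hX, hL, h₃, h₄a, h₄b, h₅⟩ := exists_isFeasible_of_mem_Hset hp
    exact ⟨hX, a, hL, h₃, h₄a, h₄b, h₅⟩
  · exact IsFeasible.mem_Hset ⟨hX, hL, h₃, h₄a, h₄b, h₅⟩
end

section
/- 𝓗 equals the set of all (x, X, y, Y₁₂) for which there exists α ∈ ℝ² such that (x, X, y, Y₁₂, α) satisfies the linear conditions (L) and the single PSD condition (P5). -/
open Matrix

/-! Split a point satisfying (L) and (P5) into a part of mass `Y₁₂` on the vertex `y = (1, 1)` and
parts of masses `yᵢ - Y₁₂` on the other two nonzero vertices: `αᵢ` is the portion of `xᵢ` outside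
`(1, 1)`. The first part has to be a scaled point of the convex hull of `(a, b, a², ab, b²)` over
the unit square. That hull is described by the McCormick inequalities, the bounds of second moments
by first moments and positive semidefiniteness: a singular covariance matrix is realised by two
points, and the general case lies between a singular one and a mixture of vertices of the square.

Taking `αᵢ² / (yᵢ - Y₁₂)` out of `Xᵢᵢ` leaves, by the Schur complement in (P5), a positive
semidefinite first part, but its diagonal may be too large. If this happens in both coordinates, the
McCormick inequalities alone suffice. If it happens in one, that `αᵢ` is moved towards the value
with zero covariance, as long as the other part can absorb the excess of the diagonal.
-/

open Set

section OrderedField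
variable {𝕜 : Type*} [Field 𝕜] [LinearOrder 𝕜] [IsStrictOrderedRing 𝕜]

lemma smul_add_smul_add_smul_mem_of_zero_mem {E : Type*} [AddCommGroup E] [Module 𝕜 E]
    {S : Set E} (hS : Convex 𝕜 S) (h₀ : 0 ∈ S) {x y z : E} (hx : x ∈ S) (hy : y ∈ S) (hz : z ∈ S)
    {a b c : 𝕜} (ha : 0 ≤ a) (hb : 0 ≤ b) (hc : 0 ≤ c) (habc : a + b + c ≤ 1) :
    a • x + b • y + c • z ∈ S := by
  have key := hS.sum_mem (t := Finset.univ) (w := ![a, b, c, 1 - (a + b + c)]) (z := ![x, y, z, 0])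
    (by simp [Fin.forall_fin_succ, *]) (by simp [Fin.sum_univ_four])
    (by simp [Fin.forall_fin_succ, *])
  simpa [Fin.sum_univ_four] using key

lemma sq_le_mul_of_le_of_neg_le {d a b a' b' : 𝕜} (ha : d ≤ a) (hb : d ≤ b) (ha' : -d ≤ a')
    (hb' : -d ≤ b') (h : a' * b' = a * b) : d ^ 2 ≤ a * b := by
  rcases le_total 0 d with hd | hd
  · rw [sq]
    exact mul_le_mul ha hb hd (hd.trans ha)
  · rw [← neg_sq, sq, ← h]
    exact mul_le_mul ha' hb' (neg_nonneg.2 hd) ((neg_nonneg.2 hd).trans ha')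

lemma exists_sq_eq_mul_of_sq_le_mul {d p q : 𝕜} (hp : 0 ≤ p) (hq : 0 ≤ q) (h : d ^ 2 ≤ p * q) :
    ∃ p', 0 ≤ p' ∧ p' ≤ p ∧ d ^ 2 = p' * q := by
  refine ⟨d ^ 2 / q, by positivity, div_le_of_le_mul₀ hq hp h, (div_mul_cancel_of_imp ?_).symm⟩
  rintro rfl
  exact le_antisymm (by simpa using h) (sq_nonneg d)

lemma sq_le_mul_of_quadratic_nonneg {p q r : 𝕜} (h : ∀ z, 0 ≤ p * z ^ 2 + 2 * q * z + r) :
    q ^ 2 ≤ p * r := by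
  have hdiscrim := discrim_le_zero (a := p) (b := 2 * q) (c := r) fun z => by linarith [h z]
  rw [discrim] at hdiscrim
  linarith

end OrderedField

/-- The McCormick inequalities for the moments `u`, `v`, `c` of `x`, `y`, `xy` under a measure of
mass `m` on the unit square. -/
structure McCormick (m u v c : ℝ) : Prop where
  nonneg : 0 ≤ c
  le_fst : c ≤ u
  le_snd : c ≤ v
  add_sub_le : u + v - m ≤ c

/-- Positive semidefiniteness of the moment matrix `[[m, u, v], [u, t, c], [v, c, s]]` with `0 < m`,
through its Schur complement at `m`, multiplied by `m` so that no division occurs. At `m = 0` there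
is no condition on `c`, which the McCormick inequalities then force to vanish. -/
structure IsMomentPSD (m u v t c s : ℝ) : Prop where
  diag_fst_nonneg : 0 ≤ t
  diag_snd_nonneg : 0 ≤ s
  sq_fst_le : u ^ 2 ≤ t * m
  sq_snd_le : v ^ 2 ≤ s * m
  sq_cov_le : (c * m - u * v) ^ 2 ≤ (t * m - u ^ 2) * (s * m - v ^ 2)

/-- The conditions characterising the moments `u`, `v`, `t`, `c`, `s` of `x`, `y`, `x²`, `xy`, `y²`
under a measure of mass `m` on the unit square. -/
structure IsBoxMoment (m u v t c s : ℝ) : Prop extends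
    McCormick m u v c, IsMomentPSD m u v t c s where
  diag_fst_le : t ≤ u
  diag_snd_le : s ≤ v

/-- The conditions characterising the first and second moments `a` and `b` of a measure of mass `m`
on the unit interval. -/
structure IsIntervalMoment (m a b : ℝ) : Prop where
  mass_nonneg : 0 ≤ m
  diag_nonneg : 0 ≤ b
  diag_le : b ≤ a
  sq_le : a ^ 2 ≤ m * b

section Moments
variable {m u v t c s : ℝ}

namespace McCormick

lemma symm (h : McCormick m u v c) : McCormick m v u c :=
  ⟨h.nonneg, h.le_snd, h.le_fst, by linarith [h.add_sub_le]⟩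

lemma reflect_snd (h : McCormick m u v c) : McCormick m u (m - v) (u - c) :=
  ⟨by linarith [h.le_fst], by linarith [h.nonneg], by linarith [h.add_sub_le],
    by linarith [h.le_snd]⟩

lemma fst_nonneg (h : McCormick m u v c) : 0 ≤ u := h.nonneg.trans h.le_fst

lemma fst_le_mass (h : McCormick m u v c) : u ≤ m := by linarith [h.le_snd, h.add_sub_le]

lemma snd_nonneg (h : McCormick m u v c) : 0 ≤ v := h.symm.fst_nonneg

lemma snd_le_mass (h : McCormick m u v c) : v ≤ m := h.symm.fst_le_mass

lemma fst_mem_Icc (h : McCormick 1 u v c) : u ∈ Icc (0 : ℝ) 1 := ⟨h.fst_nonneg, h.fst_le_mass⟩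

lemma snd_mem_Icc (h : McCormick 1 u v c) : v ∈ Icc (0 : ℝ) 1 := h.symm.fst_mem_Icc

lemma mass_nonneg (h : McCormick m u v c) : 0 ≤ m := h.fst_nonneg.trans h.fst_le_mass

lemma cov_le_fst (h : McCormick m u v c) : c * m - u * v ≤ u * (m - v) := by
  linarith [mul_le_mul_of_nonneg_right h.le_fst h.mass_nonneg]

lemma cov_le_snd (h : McCormick m u v c) : c * m - u * v ≤ v * (m - u) := by
  linarith [h.symm.cov_le_fst]

lemma neg_cov_le (h : McCormick m u v c) : -(c * m - u * v) ≤ u * v := by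
  linarith [mul_nonneg h.nonneg h.mass_nonneg]

lemma neg_cov_le_compl (h : McCormick m u v c) :
    -(c * m - u * v) ≤ (m - u) * (m - v) := by
  linarith [mul_le_mul_of_nonneg_right h.add_sub_le h.mass_nonneg]

lemma sq_fst_le (h : McCormick m u v c) : u ^ 2 ≤ u * m := by
  rw [sq]
  exact mul_le_mul_of_nonneg_left h.fst_le_mass h.fst_nonneg

lemma isMomentPSD (h : McCormick m u v c) : IsMomentPSD m u v u c v where
  diag_fst_nonneg := h.fst_nonneg
  diag_snd_nonneg := h.snd_nonneg
  sq_fst_le := h.sq_fst_le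
  sq_snd_le := h.symm.sq_fst_le
  sq_cov_le := calc
    (c * m - u * v) ^ 2 ≤ u * (m - v) * (v * (m - u)) :=
      sq_le_mul_of_le_of_neg_le h.cov_le_fst h.cov_le_snd h.neg_cov_le h.neg_cov_le_compl (by ring)
    _ = (u * m - u ^ 2) * (v * m - v ^ 2) := by ring

lemma of_mem_uIcc {v₁ v₂ : ℝ} (h₁ : McCormick m u v₁ c) (h₂ : McCormick m u v₂ c)
    (hv : v ∈ uIcc v₁ v₂) : McCormick m u v c := by
  have hv' : v ∈ Icc c (m + c - u) :=
    ordConnected_Icc.uIcc_subset ⟨h₁.le_snd, by linarith [h₁.add_sub_le]⟩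
      ⟨h₂.le_snd, by linarith [h₂.add_sub_le]⟩ hv
  exact ⟨h₁.nonneg, h₁.le_fst, hv'.1, by linarith [hv'.2]⟩

lemma exists_mul_eq (h : McCormick m u v c) : ∃ w, u * w = c * m ∧ McCormick m u w c := by
  rcases h.fst_nonneg.eq_or_lt with hu | hu
  · have hc : c = 0 := by linarith [h.nonneg, h.le_fst]
    exact ⟨v, by simp [← hu, hc], h⟩
  · refine ⟨c * m / u, mul_div_cancel₀ _ hu.ne', h.nonneg, h.le_fst, ?_, ?_⟩
    · rw [le_div_iff₀ hu]
      exact mul_le_mul_of_nonneg_left h.fst_le_mass h.nonneg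
    · have hprod : 0 ≤ (m - u) * (u - c) :=
        mul_nonneg (sub_nonneg.2 h.fst_le_mass) (sub_nonneg.2 h.le_fst)
      have hdiv : c * m / u ≤ m + c - u := by
        rw [div_le_iff₀ hu]
        linarith
      linarith

end McCormick

lemma IsMomentPSD.symm (h : IsMomentPSD m u v t c s) : IsMomentPSD m v u s c t :=
  ⟨h.diag_snd_nonneg, h.diag_fst_nonneg, h.sq_snd_le, h.sq_fst_le, by linarith [h.sq_cov_le]⟩

lemma IsBoxMoment.symm (h : IsBoxMoment m u v t c s) : IsBoxMoment m v u s c t :=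
  { h.toMcCormick.symm, h.toIsMomentPSD.symm with
    diag_fst_le := h.diag_snd_le
    diag_snd_le := h.diag_fst_le }

namespace IsIntervalMoment
variable {a b : ℝ}

lemma nonneg (h : IsIntervalMoment m a b) : 0 ≤ a := h.diag_nonneg.trans h.diag_le

lemma le_mass (h : IsIntervalMoment m a b) : a ≤ m := by
  by_contra! ha
  nlinarith [h.mass_nonneg, h.diag_le, h.sq_le]

lemma isBoxMoment (h : IsIntervalMoment m a b) : IsBoxMoment m a 0 b 0 0 where
  nonneg := le_rfl
  le_fst := h.nonneg
  le_snd := le_rfl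
  add_sub_le := by linarith [h.le_mass]
  diag_fst_nonneg := h.diag_nonneg
  diag_snd_nonneg := le_rfl
  sq_fst_le := by linarith [h.sq_le]
  sq_snd_le := by simp
  sq_cov_le := by simp
  diag_fst_le := h.diag_le
  diag_snd_le := le_rfl

end IsIntervalMoment
end Moments

section BoxHull
variable {u v t c s : ℝ}

/-- The convex hull of the moment vectors of the points of the unit square, in the coordinates
`(x, y, x², xy, y²)`. -/
def boxHull : Set (ℝ × ℝ × ℝ × ℝ × ℝ) :=
  convexHull ℝ {p | ∃ a ∈ Icc (0 : ℝ) 1, ∃ b ∈ Icc (0 : ℝ) 1, p = (a, b, a ^ 2, a * b, b ^ 2)}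

lemma convex_boxHull : Convex ℝ boxHull := convex_convexHull ℝ _

lemma moments_mem_boxHull (hu : u ∈ Icc (0 : ℝ) 1) (hv : v ∈ Icc (0 : ℝ) 1) :
    (u, v, u ^ 2, u * v, v ^ 2) ∈ boxHull :=
  subset_convexHull ℝ _ ⟨u, hu, v, hv, rfl⟩

lemma zero_mem_boxHull : (0 : ℝ × ℝ × ℝ × ℝ × ℝ) ∈ boxHull := by
  simpa [← Prod.mk_zero_zero] using moments_mem_boxHull (u := 0) (v := 0) (by simp) (by simp)

lemma ordConnected_diag_fst_boxHull : OrdConnected {t | (u, v, t, c, s) ∈ boxHull} := by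
  refine Convex.ordConnected fun t ht t' ht' a b ha hb hab => ?_
  have h := convex_boxHull ht ht' ha hb hab
  simpa [← add_mul, hab] using h

lemma ordConnected_diag_snd_boxHull : OrdConnected {s | (u, v, t, c, s) ∈ boxHull} := by
  refine Convex.ordConnected fun s hs s' hs' a b ha hb hab => ?_
  have h := convex_boxHull hs hs' ha hb hab
  simpa [← add_mul, hab] using h

lemma McCormick.mem_boxHull (h : McCormick 1 u v c) : (u, v, u, c, v) ∈ boxHull := by
  have h₁₁ := moments_mem_boxHull (u := 1) (v := 1) (by simp) (by simp)
  have h₁₀ := moments_mem_boxHull (u := 1) (v := 0) (by simp) (by simp)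
  have h₀₁ := moments_mem_boxHull (u := 0) (v := 1) (by simp) (by simp)
  have key := smul_add_smul_add_smul_mem_of_zero_mem convex_boxHull zero_mem_boxHull h₁₁ h₁₀ h₀₁
    h.nonneg (sub_nonneg.2 h.le_fst) (sub_nonneg.2 h.le_snd) (by linarith [h.add_sub_le])
  simpa using key

lemma mem_boxHull_of_two_points {r e f : ℝ} (hr : 0 < r)
    (hu : u + r * e ∈ Icc (0 : ℝ) 1) (hv : v + r * f ∈ Icc (0 : ℝ) 1)
    (hu' : u - e / r ∈ Icc (0 : ℝ) 1) (hv' : v - f / r ∈ Icc (0 : ℝ) 1) :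
    (u, v, u ^ 2 + e ^ 2, u * v + e * f, v ^ 2 + f ^ 2) ∈ boxHull := by
  -- The weights `1 : r²` balance the displacements `r • (e, f)` and `-r⁻¹ • (e, f)`.
  have key := convex_boxHull (moments_mem_boxHull hu hv) (moments_mem_boxHull hu' hv')
    (a := 1 / (1 + r ^ 2)) (b := r ^ 2 / (1 + r ^ 2)) (by positivity) (by positivity)
    (by field_simp)
  convert key using 1
  simp only [Prod.smul_mk, Prod.mk_add_mk, smul_eq_mul, Prod.mk.injEq]
  refine ⟨?_, ?_, ?_, ?_, ?_⟩ <;> field_simp <;> ring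

lemma exists_two_point_scale {e f : ℝ} (hu : u ∈ Icc (0 : ℝ) 1) (hv : v ∈ Icc (0 : ℝ) 1)
    (he : 0 ≤ e) (hf : 0 ≤ f) (hee : e ^ 2 ≤ u * (1 - u)) (hff : f ^ 2 ≤ v * (1 - v))
    (hef : e * f ≤ u * (1 - v)) (hfe : e * f ≤ v * (1 - u)) :
    ∃ r, 0 < r ∧ e ≤ u * r ∧ f ≤ v * r ∧ r * e ≤ 1 - u ∧ r * f ≤ 1 - v := by
  have le_of_sq {x y : ℝ} (h : x ^ 2 ≤ y * (1 - y)) : x ≤ y * (x / y) := by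
    refine (mul_div_cancel_of_imp' ?_).ge
    rintro rfl
    exact pow_eq_zero_iff two_ne_zero |>.1 (le_antisymm (by simpa using h) (sq_nonneg x))
  set r := max (e / u) (f / v) with hr
  have hr₀ : 0 ≤ r := le_max_of_le_left (div_nonneg he hu.1)
  have her : e ≤ u * r :=
    (le_of_sq hee).trans (mul_le_mul_of_nonneg_left (le_max_left _ _) hu.1)
  have hfr : f ≤ v * r :=
    (le_of_sq hff).trans (mul_le_mul_of_nonneg_left (le_max_right _ _) hv.1)
  rcases hr₀.eq_or_lt with h | h
  · have he₀ : e = 0 := le_antisymm (by simpa [← h] using her) he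
    have hf₀ : f = 0 := le_antisymm (by simpa [← h] using hfr) hf
    exact ⟨1, one_pos, by simp [he₀, hu.1], by simp [hf₀, hv.1], by simp [he₀, hu.2],
      by simp [hf₀, hv.2]⟩
  · refine ⟨r, h, her, hfr, ?_, ?_⟩
    · rw [hr, max_mul_of_nonneg _ _ he, div_mul_eq_mul_div, div_mul_eq_mul_div]
      exact max_le (div_le_of_le_mul₀ hu.1 (sub_nonneg.2 hu.2) (by linarith))
        (div_le_of_le_mul₀ hv.1 (sub_nonneg.2 hu.2) (by linarith))
    · rw [hr, max_mul_of_nonneg _ _ hf, div_mul_eq_mul_div, div_mul_eq_mul_div]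
      exact max_le (div_le_of_le_mul₀ hu.1 (sub_nonneg.2 hv.2) (by linarith))
        (div_le_of_le_mul₀ hv.1 (sub_nonneg.2 hv.2) (by linarith))

lemma add_mul_mem_Icc_and_sub_div_mem_Icc {e r : ℝ} (hu : u ∈ Icc (0 : ℝ) 1) (he : 0 ≤ e)
    (hr : 0 < r) (hle : e ≤ u * r) (hle' : r * e ≤ 1 - u) :
    u + r * e ∈ Icc (0 : ℝ) 1 ∧ u - e / r ∈ Icc (0 : ℝ) 1 := by
  have hre : 0 ≤ r * e := mul_nonneg hr.le he
  have her : 0 ≤ e / r := div_nonneg he hr.le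
  have her' : e / r ≤ u := (div_le_iff₀ hr).2 hle
  exact ⟨⟨by linarith [hu.1], by linarith⟩, ⟨by linarith, by linarith [hu.2]⟩⟩

lemma mem_boxHull_of_cov_nonneg {e f : ℝ} (he : 0 ≤ e) (hf : 0 ≤ f)
    (h : IsBoxMoment 1 u v (u ^ 2 + e ^ 2) (u * v + e * f) (v ^ 2 + f ^ 2)) :
    (u, v, u ^ 2 + e ^ 2, u * v + e * f, v ^ 2 + f ^ 2) ∈ boxHull := by
  obtain ⟨r, hr, h₁, h₂, h₃, h₄⟩ := exists_two_point_scale h.fst_mem_Icc h.snd_mem_Icc he hf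
    (by linarith [h.diag_fst_le]) (by linarith [h.diag_snd_le])
    (by linarith [h.cov_le_fst]) (by linarith [h.cov_le_snd])
  obtain ⟨hu, hu'⟩ := add_mul_mem_Icc_and_sub_div_mem_Icc h.fst_mem_Icc he hr h₁ h₃
  obtain ⟨hv, hv'⟩ := add_mul_mem_Icc_and_sub_div_mem_Icc h.snd_mem_Icc hf hr h₂ h₄
  exact mem_boxHull_of_two_points hr hu hv hu' hv'

lemma mem_boxHull_of_cov_nonpos {e f : ℝ} (he : 0 ≤ e) (hf : 0 ≤ f)
    (h : IsBoxMoment 1 u v (u ^ 2 + e ^ 2) (u * v + e * -f) (v ^ 2 + f ^ 2)) :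
    (u, v, u ^ 2 + e ^ 2, u * v + e * -f, v ^ 2 + f ^ 2) ∈ boxHull := by
  have hv₁ : 1 - v ∈ Icc (0 : ℝ) 1 := Icc.mem_iff_one_sub_mem.1 h.snd_mem_Icc
  obtain ⟨r, hr, h₁, h₂, h₃, h₄⟩ := exists_two_point_scale h.fst_mem_Icc hv₁ he hf
    (by linarith [h.diag_fst_le]) (by linarith [h.diag_snd_le])
    (by linarith [h.neg_cov_le]) (by linarith [h.neg_cov_le_compl])
  obtain ⟨hu, hu'⟩ := add_mul_mem_Icc_and_sub_div_mem_Icc h.fst_mem_Icc he hr h₁ h₃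
  obtain ⟨hv, hv'⟩ := add_mul_mem_Icc_and_sub_div_mem_Icc hv₁ hf hr h₂ h₄
  rw [← neg_sq f]
  refine mem_boxHull_of_two_points hr hu ?_ hu' ?_
  · convert Icc.mem_iff_one_sub_mem.1 hv using 1
    ring
  · convert Icc.mem_iff_one_sub_mem.1 hv' using 1
    ring

lemma IsBoxMoment.mem_boxHull_of_singular (h : IsBoxMoment 1 u v t c s)
    (hdet : (c - u * v) ^ 2 = (t - u ^ 2) * (s - v ^ 2)) : (u, v, t, c, s) ∈ boxHull := by
  obtain ⟨e, he, het⟩ : ∃ e, 0 ≤ e ∧ e ^ 2 = t - u ^ 2 :=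
    ⟨√(t - u ^ 2), Real.sqrt_nonneg _, Real.sq_sqrt (by linarith [h.sq_fst_le])⟩
  obtain ⟨f, hf, hfs⟩ : ∃ f, 0 ≤ f ∧ f ^ 2 = s - v ^ 2 :=
    ⟨√(s - v ^ 2), Real.sqrt_nonneg _, Real.sq_sqrt (by linarith [h.sq_snd_le])⟩
  obtain rfl : t = u ^ 2 + e ^ 2 := by linarith
  obtain rfl : s = v ^ 2 + f ^ 2 := by linarith
  have hc : (c - u * v) ^ 2 = (e * f) ^ 2 := by linear_combination hdet
  rcases sq_eq_sq_iff_eq_or_eq_neg.1 hc with hc | hc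
  · obtain rfl : c = u * v + e * f := by linarith
    exact mem_boxHull_of_cov_nonneg he hf h
  · obtain rfl : c = u * v + e * -f := by linarith
    exact mem_boxHull_of_cov_nonpos he hf h

lemma IsBoxMoment.mem_boxHull_of_diag_fst_eq (h : IsBoxMoment 1 u v u c s) :
    (u, v, u, c, s) ∈ boxHull := by
  obtain ⟨hu₀, -, hu, hv, hdet⟩ := h.toIsMomentPSD
  obtain ⟨q, hq₀, hq, hdetq⟩ := exists_sq_eq_mul_of_sq_le_mul (sub_nonneg.2 hv)
    (sub_nonneg.2 hu) (hdet.trans_eq (mul_comm _ _))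
  simp only [mul_one] at hu hdetq hq
  have hsing : (u, v, u, c, v ^ 2 + q) ∈ boxHull :=
    IsBoxMoment.mem_boxHull_of_singular
      ⟨h.toMcCormick, ⟨hu₀, by positivity, h.sq_fst_le, by linarith, by linarith⟩, le_rfl,
        by linarith [h.diag_snd_le]⟩ (by linarith)
  exact ordConnected_diag_snd_boxHull.out hsing h.toMcCormick.mem_boxHull
    ⟨by linarith, h.diag_snd_le⟩

theorem IsBoxMoment.mem_boxHull (h : IsBoxMoment 1 u v t c s) : (u, v, t, c, s) ∈ boxHull := by
  obtain ⟨-, hs₀, hu, hv, hdet⟩ := h.toIsMomentPSD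
  obtain ⟨p, hp₀, hp, hdetp⟩ := exists_sq_eq_mul_of_sq_le_mul (sub_nonneg.2 hu)
    (sub_nonneg.2 hv) hdet
  have hsing : (u, v, u ^ 2 + p, c, s) ∈ boxHull :=
    IsBoxMoment.mem_boxHull_of_singular
      ⟨h.toMcCormick, ⟨by positivity, hs₀, by linarith, hv, by linarith⟩,
        by linarith [h.diag_fst_le], h.diag_snd_le⟩ (by linarith)
  have hface : (u, v, u, c, s) ∈ boxHull := by
    refine IsBoxMoment.mem_boxHull_of_diag_fst_eq
      ⟨h.toMcCormick, ⟨h.fst_nonneg, hs₀, h.toMcCormick.sq_fst_le, hv, ?_⟩, le_rfl, h.diag_snd_le⟩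
    refine hdet.trans (mul_le_mul_of_nonneg_right ?_ (sub_nonneg.2 hv))
    linarith [h.diag_fst_le]
  exact ordConnected_diag_fst_boxHull.out hsing hface ⟨by linarith, h.diag_fst_le⟩

lemma IsBoxMoment.div_mass {m : ℝ} (h : IsBoxMoment m u v t c s) (hm : 0 < m) :
    IsBoxMoment 1 (u / m) (v / m) (t / m) (c / m) (s / m) where
  nonneg := div_nonneg h.nonneg hm.le
  le_fst := div_le_div_of_nonneg_right h.le_fst hm.le
  le_snd := div_le_div_of_nonneg_right h.le_snd hm.le
  add_sub_le := by
    field_simp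
    exact h.add_sub_le
  diag_fst_nonneg := div_nonneg h.diag_fst_nonneg hm.le
  diag_snd_nonneg := div_nonneg h.diag_snd_nonneg hm.le
  sq_fst_le := by
    field_simp
    linarith [h.sq_fst_le]
  sq_snd_le := by
    field_simp
    linarith [h.sq_snd_le]
  sq_cov_le := by
    field_simp
    linarith [h.sq_cov_le]
  diag_fst_le := div_le_div_of_nonneg_right h.diag_fst_le hm.le
  diag_snd_le := div_le_div_of_nonneg_right h.diag_snd_le hm.le

lemma IsBoxMoment.exists_eq_smul {m : ℝ} (h : IsBoxMoment m u v t c s) :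
    ∃ p ∈ boxHull, (u, v, t, c, s) = m • p := by
  rcases h.mass_nonneg.eq_or_lt with rfl | hm
  · have hu : u = 0 := le_antisymm h.fst_le_mass h.fst_nonneg
    have hv : v = 0 := le_antisymm h.snd_le_mass h.snd_nonneg
    have ht : t = 0 := le_antisymm (h.diag_fst_le.trans_eq hu) h.diag_fst_nonneg
    have hs : s = 0 := le_antisymm (h.diag_snd_le.trans_eq hv) h.diag_snd_nonneg
    have hc : c = 0 := le_antisymm (h.le_fst.trans_eq hu) h.nonneg
    exact ⟨0, zero_mem_boxHull, by simp [hu, hv, ht, hs, hc]⟩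
  · exact ⟨_, (h.div_mass hm).mem_boxHull, by simp [mul_div_cancel₀, hm.ne']⟩

end BoxHull

section Split
variable {m u v v' c t s p L x X a : ℝ}

lemma IsIntervalMoment.of_sq_div_le {b : ℝ} (ha : 0 ≤ a) (haL : a ≤ L) (h : a ^ 2 / L ≤ b)
    (hb : b ≤ a) : IsIntervalMoment L a b := by
  have hL : 0 ≤ L := ha.trans haL
  refine ⟨hL, (by positivity : 0 ≤ a ^ 2 / L).trans h, hb, ?_⟩
  rcases hL.eq_or_lt with rfl | hL
  · simp [le_antisymm haL ha]
  · rwa [← div_le_iff₀' hL]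

lemma isIntervalMoment_sq_div (ha : 0 ≤ a) (haL : a ≤ L) :
    IsIntervalMoment L a (a ^ 2 / L) := by
  refine .of_sq_div_le ha haL le_rfl (div_le_of_le_mul₀ (ha.trans haL) ha ?_)
  rw [sq]
  exact mul_le_mul_of_nonneg_left haL ha

lemma isIntervalMoment_of_sq_le (hL : 0 < L) (hX : X ≤ x) (h : (x - v) ^ 2 ≤ L * (X - v)) :
    IsIntervalMoment L (x - v) (X - v) :=
  ⟨hL.le, nonneg_of_mul_nonneg_right ((sq_nonneg _).trans h) hL, sub_le_sub_right hX v, h⟩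

lemma McCormick.sq_cov_le_of_root_of_ge (h : McCormick m u v' c) (hp : 0 ≤ p) (hL : 0 < L)
    (hv : v ≤ v') (hc : u * v' ≤ c * m) (hx : v' ≤ x) (hroot : (x - v') ^ 2 = L * (X - v'))
    (hcov : L * (c * m - u * v) ^ 2 ≤
      p * (m * (L * (X - v) - (x - v) ^ 2) + L * (v * m - v ^ 2))) :
    (c * m - u * v') ^ 2 ≤ p * (v' * m - v' ^ 2) := by
  by_contra! hlt
  -- Expand `hcov` in powers of the shift: the constant term is now positive, and the linear and
  -- quadratic terms are nonnegative.
  have hd : 0 ≤ c * m - u * v' := sub_nonneg.2 hc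
  have hslope : p * v' < u * (c * m - u * v') := by
    refine lt_of_mul_lt_mul_right ?_ (sub_nonneg.2 h.snd_le_mass)
    linarith [mul_le_mul_of_nonneg_left h.cov_le_fst hd]
  have hδ : 0 ≤ v' - v := sub_nonneg.2 hv
  have hslack : L * (X - v) - (x - v) ^ 2 = (v' - v) * (L - 2 * (x - v') - (v' - v)) := by
    linear_combination -hroot
  have hlinear : 0 ≤ (v' - v) * (p * m * (x - v') + L * (u * (c * m - u * v') - p * v')) := by
    have := h.mass_nonneg
    have := sub_nonneg.2 hx
    have := sub_pos.2 hslope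
    positivity
  have hquadratic : 0 ≤ (v' - v) ^ 2 * (p * m + p * L + L * u ^ 2) := by
    have := h.mass_nonneg
    positivity
  rw [hslack] at hcov
  linarith [mul_lt_mul_of_pos_left hlt hL]

-- The reflection `y ↦ 1 - y` reverses the direction in which `v` is shifted.
lemma McCormick.sq_cov_le_of_root_of_le (h : McCormick m u v' c) (hp : 0 ≤ p) (hL : 0 < L)
    (hv : v' ≤ v) (hc : c * m ≤ u * v') (hx : x ≤ v' + L) (hroot : (x - v') ^ 2 = L * (X - v'))
    (hcov : L * (c * m - u * v) ^ 2 ≤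
      p * (m * (L * (X - v) - (x - v) ^ 2) + L * (v * m - v ^ 2))) :
    (c * m - u * v') ^ 2 ≤ p * (v' * m - v' ^ 2) := by
  have hreflect := h.reflect_snd.sq_cov_le_of_root_of_ge (v := m - v) (x := m + L - x)
    (X := m + L - 2 * x + X) hp hL (by linarith) (by linarith) (by linarith) (by linarith)
    (by linarith)
  linarith

lemma McCormick.exists_shift (h : McCormick m u v c) (hp : 0 ≤ p) (hL : 0 < L) (hX : X ≤ x)
    (hslack : (x - v) ^ 2 ≤ L * (X - v))
    (hcov : L * (c * m - u * v) ^ 2 ≤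
      p * (m * (L * (X - v) - (x - v) ^ 2) + L * (v * m - v ^ 2))) :
    ∃ v', McCormick m u v' c ∧ IsIntervalMoment L (x - v') (X - v') ∧
      (c * m - u * v') ^ 2 ≤ p * (v' * m - v' ^ 2) := by
  obtain ⟨w, hw, hMw⟩ := h.exists_mul_eq
  -- Move `v` towards `w`, where the covariance vanishes, as long as `hslack` persists.
  by_cases hslackw : (x - w) ^ 2 ≤ L * (X - w)
  · refine ⟨w, hMw, isIntervalMoment_of_sq_le hL hX hslackw, ?_⟩
    rw [hw, sub_self, zero_pow two_ne_zero]
    exact mul_nonneg hp (sub_nonneg.2 hMw.symm.sq_fst_le)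
  have hcont : ContinuousOn (fun z => L * (X - z) - (x - z) ^ 2) (uIcc v w) := by fun_prop
  obtain ⟨v', hv', hroot⟩ := intermediate_value_uIcc hcont
    (mem_uIcc.2 (Or.inr ⟨by linarith, sub_nonneg.2 hslack⟩) : (0 : ℝ) ∈ _)
  have hroot' : (x - v') ^ 2 = L * (X - v') := (sub_eq_zero.1 hroot).symm
  have hM := h.of_mem_uIcc hMw hv'
  have hint := isIntervalMoment_of_sq_le hL hX hroot'.le
  refine ⟨v', hM, hint, ?_⟩
  rcases mem_uIcc.1 hv' with ⟨hvv', hvw⟩ | ⟨hwv', hvv'⟩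
  · exact hM.sq_cov_le_of_root_of_ge hp hL hvv'
      ((mul_le_mul_of_nonneg_left hvw h.fst_nonneg).trans_eq hw) (sub_nonneg.1 hint.nonneg)
      hroot' hcov
  · exact hM.sq_cov_le_of_root_of_le hp hL hvv'
      (hw.symm.trans_le (mul_le_mul_of_nonneg_left hwv' h.fst_nonneg))
      (by linarith [hint.le_mass]) hroot' hcov

lemma IsMomentPSD.exists_snd_split_of_le (h : IsMomentPSD m u (x - a) t c (X - a ^ 2 / L))
    (hM : McCormick m u (x - a) c) (htu : t ≤ u) (hX : X ≤ x) (ha : 0 ≤ a) (haL : a ≤ L) :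
    ∃ a' b', IsIntervalMoment L a' b' ∧ IsBoxMoment m u (x - a') t c (X - b') := by
  have hL₀ : 0 ≤ L := ha.trans haL
  by_cases hs : X - a ^ 2 / L ≤ x - a
  · exact ⟨a, a ^ 2 / L, isIntervalMoment_sq_div ha haL, hM, h, htu, hs⟩
  have hL : 0 < L := hL₀.lt_of_ne fun hL => by
    subst hL
    simp only [div_zero] at hs
    linarith
  have hdiv : L * (a ^ 2 / L) = a ^ 2 := mul_div_cancel₀ _ hL.ne'
  have hp : 0 ≤ t * m - u ^ 2 := sub_nonneg.2 h.sq_fst_le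
  have hslack : (x - (x - a)) ^ 2 ≤ L * (X - (x - a)) := by
    rw [sub_sub_cancel, ← div_le_iff₀' hL]
    linarith
  obtain ⟨v', hM', hint, hcov⟩ := hM.exists_shift hp hL hX hslack (by
    linear_combination L * h.sq_cov_le - (t * m - u ^ 2) * m * hdiv)
  refine ⟨x - v', X - v', hint, ?_⟩
  rw [sub_sub_cancel, sub_sub_cancel]
  exact ⟨hM', ⟨h.diag_fst_nonneg, hM'.snd_nonneg, h.sq_fst_le, hM'.symm.sq_fst_le, hcov⟩, htu,
    le_rfl⟩

lemma IsMomentPSD.exists_split {L₁ L₂ x₁ x₂ X₁ X₂ a₁ a₂ : ℝ}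
    (h : IsMomentPSD m (x₁ - a₁) (x₂ - a₂) (X₁ - a₁ ^ 2 / L₁) c (X₂ - a₂ ^ 2 / L₂))
    (hM : McCormick m (x₁ - a₁) (x₂ - a₂) c) (hX₁ : X₁ ≤ x₁) (hX₂ : X₂ ≤ x₂)
    (ha₁ : 0 ≤ a₁) (haL₁ : a₁ ≤ L₁) (ha₂ : 0 ≤ a₂) (haL₂ : a₂ ≤ L₂) :
    ∃ a₁' b₁ a₂' b₂, IsIntervalMoment L₁ a₁' b₁ ∧ IsIntervalMoment L₂ a₂' b₂ ∧
      IsBoxMoment m (x₁ - a₁') (x₂ - a₂') (X₁ - b₁) c (X₂ - b₂) := by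
  rcases le_or_gt (X₁ - a₁ ^ 2 / L₁) (x₁ - a₁) with h₁ | h₁
  · obtain ⟨a₂', b₂, hint, hbox⟩ := h.exists_snd_split_of_le hM h₁ hX₂ ha₂ haL₂
    exact ⟨a₁, _, a₂', b₂, isIntervalMoment_sq_div ha₁ haL₁, hint, hbox⟩
  rcases le_or_gt (X₂ - a₂ ^ 2 / L₂) (x₂ - a₂) with h₂ | h₂
  · obtain ⟨a₁', b₁, hint, hbox⟩ := h.symm.exists_snd_split_of_le hM.symm h₂ hX₁ ha₁ haL₁
    exact ⟨a₁', b₁, a₂, _, hint, isIntervalMoment_sq_div ha₂ haL₂, hbox.symm⟩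
  · refine ⟨a₁, X₁ - (x₁ - a₁), a₂, X₂ - (x₂ - a₂), .of_sq_div_le ha₁ haL₁ (by linarith)
      (by linarith), .of_sq_div_le ha₂ haL₂ (by linarith) (by linarith), ?_⟩
    rw [sub_sub_cancel, sub_sub_cancel]
    exact ⟨hM, hM.isMomentPSD, le_rfl, le_rfl⟩

end Split

section QuadraticForm
variable {m u v t c s x1 x2 X11 X12 X22 y1 y2 Y12 a1 a2 : ℝ}

lemma IsMomentPSD.of_quadratic_nonneg
    (h : ∀ z w₁ w₂, 0 ≤ m * z ^ 2 + t * w₁ ^ 2 + s * w₂ ^ 2 +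
      2 * (u * (z * w₁) + v * (z * w₂) + c * (w₁ * w₂))) : IsMomentPSD m u v t c s := by
  have hm : 0 ≤ m := by linarith [h 1 0 0]
  have hu : u ^ 2 ≤ t * m := by
    rw [mul_comm]
    exact sq_le_mul_of_quadratic_nonneg fun z => by linarith [h z 1 0]
  have hv : v ^ 2 ≤ s * m := by
    rw [mul_comm]
    exact sq_le_mul_of_quadratic_nonneg fun z => by linarith [h z 0 1]
  refine ⟨by linarith [h 0 1 0], by linarith [h 0 0 1], hu, hv, ?_⟩
  rcases hm.eq_or_lt with rfl | hm
  · have hu₀ : u = 0 := by simpa using hu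
    have hv₀ : v = 0 := by simpa using hv
    simp [hu₀, hv₀]
  · refine sq_le_mul_of_quadratic_nonneg fun w => nonneg_of_mul_nonneg_right ?_ hm
    linarith [h (-(u * w + v)) (m * w) m]

lemma P5cond_iff : P5cond x1 x2 X11 X12 X22 y1 y2 Y12 a1 a2 ↔ ∀ z₁ z₂ z₃ z₄ z₅ : ℝ,
    0 ≤ (y1 - Y12) * z₁ ^ 2 + (y2 - Y12) * z₂ ^ 2 + Y12 * z₃ ^ 2 + X11 * z₄ ^ 2 + X22 * z₅ ^ 2 +
      2 * (a1 * (z₁ * z₄) + a2 * (z₂ * z₅) + (x1 - a1) * (z₃ * z₄) + (x2 - a2) * (z₃ * z₅) +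
        X12 * (z₄ * z₅)) := by
  refine ⟨fun h z₁ z₂ z₃ z₄ z₅ => ?_, fun h => .of_dotProduct_mulVec_nonneg ?_ fun z => ?_⟩
  · have := h.dotProduct_mulVec_nonneg ![z₁, z₂, z₃, z₄, z₅]
    simp only [dotProduct, Matrix.mulVec, Fin.sum_univ_five, star_trivial, Matrix.of_apply,
      Matrix.cons_val] at this
    linarith
  · ext i j
    fin_cases i <;> fin_cases j <;> simp
  · have := h (z 0) (z 1) (z 2) (z 3) (z 4)
    simp only [dotProduct, Matrix.mulVec, Fin.sum_univ_five, star_trivial, Matrix.of_apply,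
      Matrix.cons_val]
    linarith

lemma P5cond.isMomentPSD (h : P5cond x1 x2 X11 X12 X22 y1 y2 Y12 a1 a2) :
    IsMomentPSD Y12 (x1 - a1) (x2 - a2) (X11 - a1 ^ 2 / (y1 - Y12)) X12
      (X22 - a2 ^ 2 / (y2 - Y12)) := by
  rw [P5cond_iff] at h
  have h₁ : a1 ^ 2 ≤ (y1 - Y12) * X11 :=
    sq_le_mul_of_quadratic_nonneg fun z => by linarith [h z 0 0 1 0]
  have h₂ : a2 ^ 2 ≤ (y2 - Y12) * X22 :=
    sq_le_mul_of_quadratic_nonneg fun z => by linarith [h 0 z 0 0 1]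
  have hdiv₁ : (y1 - Y12) * (a1 / (y1 - Y12)) = a1 :=
    mul_div_cancel_of_imp' fun hy => by simpa [hy] using h₁
  have hdiv₂ : (y2 - Y12) * (a2 / (y2 - Y12)) = a2 :=
    mul_div_cancel_of_imp' fun hy => by simpa [hy] using h₂
  refine .of_quadratic_nonneg fun z w₁ w₂ => ?_
  have := h (-(a1 / (y1 - Y12)) * w₁) (-(a2 / (y2 - Y12)) * w₂) z w₁ w₂
  linear_combination this +
    a1 / (y1 - Y12) * w₁ ^ 2 * hdiv₁ + a2 / (y2 - Y12) * w₂ ^ 2 * hdiv₂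

end QuadraticForm

section Projection
variable {x1 x2 X11 X12 X22 y1 y2 Y12 a1 a2 x1' x2' X11' X12' X22' y1' y2' Y12' a1' a2' : ℝ}

lemma Lcond_iff : Lcond x1 x2 X11 X12 X22 y1 y2 Y12 a1 a2 ↔
    X11 ≤ x1 ∧ X22 ≤ x2 ∧ a1 ∈ Icc 0 (y1 - Y12) ∧ a2 ∈ Icc 0 (y2 - Y12) ∧
      McCormick Y12 (x1 - a1) (x2 - a2) X12 ∧ McCormick 1 y1 y2 Y12 := by
  simp only [Lcond, max_le_iff, le_min_iff]
  constructor
  · rintro ⟨hX₁, -, hX₂, -, ⟨hc₀, hc⟩, ⟨hc₁, hc₂⟩, ha₁, ha₁', ha₂, ha₂', ⟨hY₀, hY⟩, hY₁, hY₂⟩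
    exact ⟨hX₁, hX₂, ⟨ha₁, ha₁'⟩, ⟨ha₂, ha₂'⟩, ⟨hc₀, hc₁, hc₂, by linarith⟩, ⟨hY₀, hY₁, hY₂, hY⟩⟩
  · rintro ⟨hX₁, hX₂, ⟨ha₁, ha₁'⟩, ⟨ha₂, ha₂'⟩, hx, hy⟩
    exact ⟨hX₁, by linarith [hx.fst_le_mass], hX₂, by linarith [hx.snd_le_mass],
      ⟨hx.nonneg, by linarith [hx.add_sub_le]⟩, ⟨hx.le_fst, hx.le_snd⟩, ha₁, ha₁', ha₂, ha₂',
      ⟨hy.nonneg, hy.add_sub_le⟩, hy.le_fst, hy.le_snd⟩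

-- On a generator, `α₁ = x₁(1 - y₂)` is the part of `x₁` outside the vertex `y = (1, 1)`.
lemma Lcond_of_generator (hy₁ : y1 ≤ 1) (hy₂ : y2 ≤ 1) (hx₁ : 0 ≤ x1) (hx₂ : 0 ≤ x2)
    (hxy₁ : x1 ≤ y1) (hxy₂ : x2 ≤ y2) :
    Lcond x1 x2 (x1 * x1) (x1 * x2) (x2 * x2) y1 y2 (y1 * y2) (x1 * (1 - y2)) (x2 * (1 - y1)) := by
  have hy₁₀ := hx₁.trans hxy₁
  have hy₂₀ := hx₂.trans hxy₂
  refine Lcond_iff.2 ⟨mul_le_of_le_one_left hx₁ (hxy₁.trans hy₁),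
    mul_le_of_le_one_left hx₂ (hxy₂.trans hy₂), ⟨mul_nonneg hx₁ (sub_nonneg.2 hy₂), ?_⟩,
    ⟨mul_nonneg hx₂ (sub_nonneg.2 hy₁), ?_⟩, ⟨mul_nonneg hx₁ hx₂, ?_, ?_, ?_⟩,
    ⟨mul_nonneg hy₁₀ hy₂₀, mul_le_of_le_one_right hy₁₀ hy₂, mul_le_of_le_one_left hy₂₀ hy₁, ?_⟩⟩
  · linarith [mul_le_mul_of_nonneg_right hxy₁ (sub_nonneg.2 hy₂)]
  · linarith [mul_le_mul_of_nonneg_right hxy₂ (sub_nonneg.2 hy₁)]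
  · linarith [mul_le_mul_of_nonneg_left hxy₂ hx₁]
  · linarith [mul_le_mul_of_nonneg_right hxy₁ hx₂]
  · linarith [mul_nonneg (sub_nonneg.2 hxy₁) (sub_nonneg.2 hxy₂)]
  · linarith [mul_nonneg (sub_nonneg.2 hy₁) (sub_nonneg.2 hy₂)]

lemma P5cond_of_generator (hy₁ : y1 ∈ Icc (0 : ℝ) 1) (hy₂ : y2 ∈ Icc (0 : ℝ) 1)
    (hxy₁ : y1 * x1 = x1) (hxy₂ : y2 * x2 = x2) :
    P5cond x1 x2 (x1 * x1) (x1 * x2) (x2 * x2) y1 y2 (y1 * y2)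
      (x1 * (1 - y2)) (x2 * (1 - y1)) := by
  refine P5cond_iff.2 fun z₁ z₂ z₃ z₄ z₅ => ?_
  have h₁₀ : 0 ≤ y1 * (1 - y2) * (z₁ + x1 * z₄) ^ 2 :=
    mul_nonneg (mul_nonneg hy₁.1 (sub_nonneg.2 hy₂.2)) (sq_nonneg _)
  have h₀₁ : 0 ≤ y2 * (1 - y1) * (z₂ + x2 * z₅) ^ 2 :=
    mul_nonneg (mul_nonneg hy₂.1 (sub_nonneg.2 hy₁.2)) (sq_nonneg _)
  have h₁₁ : 0 ≤ y1 * y2 * (z₃ + x1 * z₄ + x2 * z₅) ^ 2 :=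
    mul_nonneg (mul_nonneg hy₁.1 hy₂.1) (sq_nonneg _)
  linear_combination h₁₀ + h₀₁ + h₁₁ +
    (x1 * z₄ ^ 2 + 2 * (1 - y2) * z₁ * z₄ + 2 * y2 * z₃ * z₄ + 2 * y2 * x2 * z₄ * z₅) * hxy₁ +
    (x2 * z₅ ^ 2 + 2 * (1 - y1) * z₂ * z₅ + 2 * y1 * z₃ * z₅ + 2 * x1 * z₄ * z₅) * hxy₂

lemma McCormick.conicCombo {m u v c m' u' v' c' k l : ℝ} (h : McCormick m u v c)
    (h' : McCormick m' u' v' c') (hk : 0 ≤ k) (hl : 0 ≤ l) :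
    McCormick (k * m + l * m') (k * u + l * u') (k * v + l * v') (k * c + l * c') where
  nonneg := add_nonneg (mul_nonneg hk h.nonneg) (mul_nonneg hl h'.nonneg)
  le_fst := by gcongr; exacts [h.le_fst, h'.le_fst]
  le_snd := by gcongr; exacts [h.le_snd, h'.le_snd]
  add_sub_le := by
    linarith [mul_le_mul_of_nonneg_left h.add_sub_le hk,
      mul_le_mul_of_nonneg_left h'.add_sub_le hl]

lemma Lcond.convexCombo {k l : ℝ} (h : Lcond x1 x2 X11 X12 X22 y1 y2 Y12 a1 a2)
    (h' : Lcond x1' x2' X11' X12' X22' y1' y2' Y12' a1' a2')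
    (hk : 0 ≤ k) (hl : 0 ≤ l) (hkl : k + l = 1) :
    Lcond (k * x1 + l * x1') (k * x2 + l * x2') (k * X11 + l * X11') (k * X12 + l * X12')
      (k * X22 + l * X22') (k * y1 + l * y1') (k * y2 + l * y2') (k * Y12 + l * Y12')
      (k * a1 + l * a1') (k * a2 + l * a2') := by
  obtain ⟨hX₁, hX₂, ha₁, ha₂, hx, hy⟩ := Lcond_iff.1 h
  obtain ⟨hX₁', hX₂', ha₁', ha₂', hx', hy'⟩ := Lcond_iff.1 h'
  have hx'' := hx.conicCombo hx' hk hl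
  have hy'' := hy.conicCombo hy' hk hl
  rw [mul_one, mul_one, hkl] at hy''
  have hIcc {a b a' b' : ℝ} (h : a ∈ Icc 0 b) (h' : a' ∈ Icc 0 b') :
      k * a + l * a' ∈ Icc 0 (k * b + l * b') :=
    ⟨add_nonneg (mul_nonneg hk h.1) (mul_nonneg hl h'.1), by gcongr; exacts [h.2, h'.2]⟩
  refine Lcond_iff.2 ⟨by gcongr, by gcongr, ?_, ?_, ?_, hy''⟩
  · convert hIcc ha₁ ha₁' using 2
    ring
  · convert hIcc ha₂ ha₂' using 2
    ring
  · convert hx'' using 1 <;> ring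

lemma P5cond.conicCombo {k l : ℝ} (h : P5cond x1 x2 X11 X12 X22 y1 y2 Y12 a1 a2)
    (h' : P5cond x1' x2' X11' X12' X22' y1' y2' Y12' a1' a2') (hk : 0 ≤ k) (hl : 0 ≤ l) :
    P5cond (k * x1 + l * x1') (k * x2 + l * x2') (k * X11 + l * X11') (k * X12 + l * X12')
      (k * X22 + l * X22') (k * y1 + l * y1') (k * y2 + l * y2') (k * Y12 + l * Y12')
      (k * a1 + l * a1') (k * a2 + l * a2') := by
  rw [P5cond_iff] at *
  intro z₁ z₂ z₃ z₄ z₅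
  linarith [mul_nonneg hk (h z₁ z₂ z₃ z₄ z₅), mul_nonneg hl (h' z₁ z₂ z₃ z₄ z₅)]

/-- The projection onto `(x, X, y, Y₁₂)` of the region cut out by (L) and (P5). -/
def liftedProjection : Set ((Fin 2 → ℝ) × Matrix (Fin 2) (Fin 2) ℝ × (Fin 2 → ℝ) × ℝ) :=
  {p | p.2.1.IsSymm ∧ ∃ a : Fin 2 → ℝ,
    Lcond (p.1 0) (p.1 1) (p.2.1 0 0) (p.2.1 0 1) (p.2.1 1 1)
      (p.2.2.1 0) (p.2.2.1 1) p.2.2.2 (a 0) (a 1) ∧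
    P5cond (p.1 0) (p.1 1) (p.2.1 0 0) (p.2.1 0 1) (p.2.1 1 1)
      (p.2.2.1 0) (p.2.2.1 1) p.2.2.2 (a 0) (a 1)}

lemma convex_liftedProjection : Convex ℝ liftedProjection := by
  rintro p ⟨hp, α, hpL, hpP⟩ q ⟨hq, β, hqL, hqP⟩ k l hk hl hkl
  exact ⟨(hp.smul k).add (hq.smul l), k • α + l • β, hpL.convexCombo hqL hk hl hkl,
    hpP.conicCombo hqP hk hl⟩

lemma Hset_subset_liftedProjection : Hset ⊆ liftedProjection := by
  refine convexHull_min ?_ convex_liftedProjection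
  rintro _ ⟨x, y, hx, hxy, hy, rfl⟩
  have hy01 (i) : y i ∈ Icc (0 : ℝ) 1 := by rcases hy i with h | h <;> simp [h]
  have hyx (i) : y i * x i = x i := by
    rcases hy i with h | h
    · simp [le_antisymm (h ▸ hxy i) (hx i)]
    · simp [h]
  exact ⟨Matrix.transpose_vecMulVec x x, ![x 0 * (1 - y 1), x 1 * (1 - y 0)],
    Lcond_of_generator (hy01 0).2 (hy01 1).2 (hx 0) (hx 1) (hxy 0) (hxy 1),
    P5cond_of_generator (hy01 0) (hy01 1) (hyx 0) (hyx 1)⟩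

end Projection

section Hull

/-- The point in the ambient space of `𝓗` with `y`-part `(y₁, y₂)` whose `x`-part has the moments
`p`, in the coordinates of `boxHull`. The multiplications by `yᵢ` make the coordinates with `yᵢ = 0`
vanish, as `x ≤ y` requires. -/
def liftBox (y₁ y₂ : ℝ) (p : ℝ × ℝ × ℝ × ℝ × ℝ) :
    (Fin 2 → ℝ) × Matrix (Fin 2) (Fin 2) ℝ × (Fin 2 → ℝ) × ℝ :=
  (![y₁ * p.1, y₂ * p.2.1],
    !![y₁ * p.2.2.1, y₁ * y₂ * p.2.2.2.1; y₁ * y₂ * p.2.2.2.1, y₂ * p.2.2.2.2],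
    ![y₁, y₂], y₁ * y₂)

lemma liftBox_convexCombo (y₁ y₂ : ℝ) (p q : ℝ × ℝ × ℝ × ℝ × ℝ) {k l : ℝ} (hkl : k + l = 1) :
    liftBox y₁ y₂ (k • p + l • q) = k • liftBox y₁ y₂ p + l • liftBox y₁ y₂ q := by
  have hy (y : ℝ) : y = k * y + l * y := by rw [← add_mul, hkl, one_mul]
  simp only [liftBox, Prod.smul_mk, Prod.mk_add_mk, Prod.mk.injEq]
  refine ⟨?_, ?_, ?_, hy _⟩
  · ext i
    fin_cases i <;> simp [mul_add, mul_left_comm]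
  · ext i j
    fin_cases i <;> fin_cases j <;> simp [mul_add, mul_left_comm, mul_assoc]
  · ext i
    fin_cases i
    exacts [hy y₁, hy y₂]

lemma convex_Hset : Convex ℝ Hset := convex_convexHull ℝ _

lemma liftBox_mem_Hset {y₁ y₂ : ℝ} {p : ℝ × ℝ × ℝ × ℝ × ℝ} (hp : p ∈ boxHull)
    (hy₁ : y₁ = 0 ∨ y₁ = 1) (hy₂ : y₂ = 0 ∨ y₂ = 1) : liftBox y₁ y₂ p ∈ Hset := by
  suffices boxHull ⊆ liftBox y₁ y₂ ⁻¹' Hset from this hp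
  refine convexHull_min ?_ fun p hp q hq k l hk hl hkl => ?_
  · rintro _ ⟨a, ha, b, hb, rfl⟩
    have hmul {y z : ℝ} (hy : y = 0 ∨ y = 1) (hz : z ∈ Icc (0 : ℝ) 1) :
        0 ≤ y * z ∧ y * z ≤ y := by
      rcases hy with rfl | rfl <;> simp [hz.1, hz.2]
    refine subset_convexHull ℝ _ ⟨![y₁ * a, y₂ * b], ![y₁, y₂], ?_, ?_, ?_, ?_⟩
    · simp [Fin.forall_fin_two, hmul hy₁ ha, hmul hy₂ hb]
    · simp [Fin.forall_fin_two, hmul hy₁ ha, hmul hy₂ hb]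
    · simp [Fin.forall_fin_two, hy₁, hy₂]
    · have hsq {y : ℝ} (hy : y = 0 ∨ y = 1) : y * y = y := by rcases hy with rfl | rfl <;> simp
      have h₁ := hsq hy₁
      have h₂ := hsq hy₂
      simp only [liftBox, Prod.mk.injEq, Matrix.cons_val, and_true, true_and]
      ext i j
      fin_cases i <;> fin_cases j <;> simp [Matrix.vecMulVec_apply] <;> grind
  · rw [mem_preimage, liftBox_convexCombo y₁ y₂ p q hkl]
    exact convex_Hset hp hq hk hl hkl

lemma zero_mem_Hset : (0 : (Fin 2 → ℝ) × Matrix (Fin 2) (Fin 2) ℝ × (Fin 2 → ℝ) × ℝ) ∈ Hset :=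
  subset_convexHull ℝ _ ⟨0, 0, fun _ => le_rfl, fun _ => le_rfl, fun _ => Or.inl rfl,
    by simp [← Prod.mk_zero_zero]⟩

lemma mem_Hset_of_split {m u v t c s L₁ a₁ b₁ L₂ a₂ b₂ : ℝ} (hbox : IsBoxMoment m u v t c s)
    (h₁ : IsIntervalMoment L₁ a₁ b₁) (h₂ : IsIntervalMoment L₂ a₂ b₂) (hmass : m + L₁ + L₂ ≤ 1) :
    (![u + a₁, v + a₂], !![t + b₁, c; c, s + b₂], ![m + L₁, m + L₂], m) ∈ Hset := by
  obtain ⟨p, hp, hpm⟩ := hbox.exists_eq_smul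
  obtain ⟨q, hq, hqm⟩ := h₁.isBoxMoment.exists_eq_smul
  obtain ⟨r, hr, hrm⟩ := h₂.isBoxMoment.symm.exists_eq_smul
  have key := smul_add_smul_add_smul_mem_of_zero_mem convex_Hset zero_mem_Hset
    (liftBox_mem_Hset hp (Or.inr rfl) (Or.inr rfl)) (liftBox_mem_Hset hq (Or.inr rfl) (Or.inl rfl))
    (liftBox_mem_Hset hr (Or.inl rfl) (Or.inr rfl)) hbox.mass_nonneg h₁.mass_nonneg
    h₂.mass_nonneg hmass
  obtain ⟨p₁, p₂, p₃, p₄, p₅⟩ := p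
  obtain ⟨q₁, q₂, q₃, q₄, q₅⟩ := q
  obtain ⟨r₁, r₂, r₃, r₄, r₅⟩ := r
  simp only [Prod.smul_mk, smul_eq_mul, Prod.mk.injEq] at hpm hqm hrm
  obtain ⟨hu, hv, ht, hc, hs⟩ := hpm
  convert key using 1
  simp only [liftBox, Prod.smul_mk, Prod.mk_add_mk, Prod.mk.injEq]
  refine ⟨?_, ?_, ?_, by simp⟩
  · ext i
    fin_cases i <;> simp [hu, hv, hqm.1, hrm.2.1]
  · ext i j
    fin_cases i <;> fin_cases j <;> simp [ht, hc, hs, hqm.2.2.1, hrm.2.2.2.2]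
  · ext i
    fin_cases i <;> simp

lemma liftedProjection_subset_Hset : liftedProjection ⊆ Hset := by
  rintro ⟨x, X, y, Y⟩ ⟨hX : X.IsSymm, α, hL, hP⟩
  obtain ⟨hX₁, hX₂, hα₁, hα₂, hMx, hMy⟩ := Lcond_iff.1 hL
  obtain ⟨a₁, b₁, a₂, b₂, h₁, h₂, hbox⟩ :=
    hP.isMomentPSD.exists_split hMx hX₁ hX₂ hα₁.1 hα₁.2 hα₂.1 hα₂.2
  have key := mem_Hset_of_split hbox h₁ h₂ (by linarith [hMy.add_sub_le])
  simp only [sub_add_cancel, add_sub_cancel] at key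
  have eta (z : Fin 2 → ℝ) : ![z 0, z 1] = z := by
    ext i
    fin_cases i <;> rfl
  have hsymm : !![X 0 0, X 0 1; X 0 1, X 1 1] = X := by
    ext i j
    fin_cases i <;> fin_cases j <;> simp [hX.apply 0 1]
  rwa [hsymm, eta, eta] at key

end Hull

/-- 𝓗 equals the projection onto (x, X, y, Y₁₂) of the points (x, X, y, Y₁₂, α)
satisfying (L) and the single PSD condition (P5). -/
theorem stmt14 :
    Hset = {p : (Fin 2 → ℝ) × Matrix (Fin 2) (Fin 2) ℝ × (Fin 2 → ℝ) × ℝ |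
      p.2.1.IsSymm ∧ ∃ a : Fin 2 → ℝ,
        Lcond (p.1 0) (p.1 1) (p.2.1 0 0) (p.2.1 0 1) (p.2.1 1 1)
          (p.2.2.1 0) (p.2.2.1 1) p.2.2.2 (a 0) (a 1) ∧
        P5cond (p.1 0) (p.1 1) (p.2.1 0 0) (p.2.1 0 1) (p.2.1 1 1)
          (p.2.2.1 0) (p.2.2.1 1) p.2.2.2 (a 0) (a 1)} :=
  Hset_subset_liftedProjection.antisymm liftedProjection_subset_Hset
end
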